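/- arXiv:2006.06581 — 8 statements merged into one kernel-verified Lean document; each statement's English description precedes it below -/
import Mathlib

section
/- Consider sequences h^t ∈ ℝ^n, u^t ∈ ℝ^m, w₁^t ∈ ℝ^p, w₂^t ∈ ℝ^q (t ∈ ℕ) and, for each t, matrices A^t ∈ ℝ^{n×n}, B^t ∈ ℝ^{n×m}, C₁^t ∈ ℝ^{p×n}, D₁^t ∈ ℝ^{p×m}, C₂^t ∈ ℝ^{q×n}, D₂^t ∈ ℝ^{q×m} such that h^{t+1} = A^t h^t + B^t u^t, w₁^t = C₁^t h^t + D₁^t u^t, and w₂^t = C₂^t h^t + D₂^t u^t for all t. Let (h*, u*, w₁*, w₂*) be a fixed point, i.e. for all t: h* = A^t h* + B^t u*, w₁* = C₁^t h* + D₁^t u*, w₂* = C₂^t h* + D₂^t u*. Let M₁^t ∈ ℝ^{p×p} and M₂^t ∈ ℝ^{q×q} be symmetric matrices such that for all t, (w₁^t − w₁*)ᵀ M₁^t (w₁^t − w₁*) ≥ 0 and (w₂^t − w₂*)ᵀ M₂^t (w₂^t − w₂*) ≥ 0. Suppose there exist a symmetric positive definite matrix P ∈ ℝ^{n×n} and,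 for each t, scalars τ_t ∈ [0,1], β₁^t ≥ 0, β₂^t ≥ 0 such that the symmetric (n+m)×(n+m) block matrix [[(A^t)ᵀ P A^t − τ_t² P , (A^t)ᵀ P B^t],[(B^t)ᵀ P A^t , (B^t)ᵀ P B^t]] + [[C₁^t, D₁^t],[C₂^t, D₂^t]]ᵀ · blockdiag(β₁^t M₁^t, β₂^t M₂^t) · [[C₁^t, D₁^t],[C₂^t, D₂^t]] is negative semidefinite. Then for every t, (h^{t+1} − h*)ᵀ P (h^{t+1} − h*) ≤ τ_t² (h^t − h*)ᵀ P (h^t − h*); consequently, if τ* := sup_t τ_t, then for all t ∈ ℕ, ‖h^t − h*‖₂ ≤ √(κ(P)) · (τ*)^t · ‖h^0 − h*‖₂, where κ(P) = λ_max(P)/λ_min(P) is the condition number of P. -/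
open Matrix

theorem aux_quad {a b : ℕ} (P : Matrix (Fin a) (Fin a) ℝ) (X : Matrix (Fin a) (Fin b) ℝ)
    {c : ℕ} (Y : Matrix (Fin a) (Fin c) ℝ) (x : Fin b → ℝ) (y : Fin c → ℝ) :
    x ⬝ᵥ (Xᵀ * P * Y).mulVec y = (X.mulVec x) ⬝ᵥ P.mulVec (Y.mulVec y) := by
  rw [← Matrix.mulVec_mulVec, ← Matrix.mulVec_mulVec, Matrix.dotProduct_mulVec,
    Matrix.vecMul_transpose]

theorem aux_psd {n : ℕ} (Q : Matrix (Fin n) (Fin n) ℝ) (hQ : Q.IsSymm)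
    (hev : ∀ (μ : ℝ) (v : Fin n → ℝ), v ≠ 0 → Q.mulVec v = μ • v → 0 ≤ μ)
    (v : Fin n → ℝ) : 0 ≤ v ⬝ᵥ Q.mulVec v := by
  have hH : Q.IsHermitian := by
    rw [Matrix.IsHermitian, Matrix.conjTranspose_eq_transpose_of_trivial]; exact hQ
  have hp : Q.PosSemidef := by
    rw [hH.posSemidef_iff_eigenvalues_nonneg]
    intro i
    refine hev _ (hH.eigenvectorBasis i).ofLp ?_ (hH.mulVec_eigenvectorBasis i)
    intro h0
    apply hH.eigenvectorBasis.orthonormal.ne_zero i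
    ext j
    exact congrFun h0 j
  simpa using hp.dotProduct_mulVec_nonneg v

/-- Time-dependent Lyapunov convergence of a linear dynamical system with
quadratic constraints (time dependent version of Lessard–Recht–Packard Theorem 4).
If the LMI is feasible at each time step with rate `τ_t ∈ [0,1]` and multipliers
`β₁ᵗ, β₂ᵗ ≥ 0`, then the `P`-quadratic form contracts by `τ_t²` at each step, and hence
`‖hᵗ − h*‖ ≤ √(κ(P)) (τ*)ᵗ ‖h⁰ − h*‖` with `τ* = sup_t τ_t` and `κ(P) = λmax(P)/λmin(P)`. -/
theorem lyapunov_lmi_linear_convergence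
    (n m p q : ℕ)
    (h : ℕ → Fin n → ℝ) (u : ℕ → Fin m → ℝ)
    (w1 : ℕ → Fin p → ℝ) (w2 : ℕ → Fin q → ℝ)
    (A : ℕ → Matrix (Fin n) (Fin n) ℝ) (B : ℕ → Matrix (Fin n) (Fin m) ℝ)
    (C1 : ℕ → Matrix (Fin p) (Fin n) ℝ) (D1 : ℕ → Matrix (Fin p) (Fin m) ℝ)
    (C2 : ℕ → Matrix (Fin q) (Fin n) ℝ) (D2 : ℕ → Matrix (Fin q) (Fin m) ℝ)
    (hdyn : ∀ t, h (t + 1) = (A t).mulVec (h t) + (B t).mulVec (u t))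
    (hw1 : ∀ t, w1 t = (C1 t).mulVec (h t) + (D1 t).mulVec (u t))
    (hw2 : ∀ t, w2 t = (C2 t).mulVec (h t) + (D2 t).mulVec (u t))
    (hstar : Fin n → ℝ) (ustar : Fin m → ℝ) (w1star : Fin p → ℝ) (w2star : Fin q → ℝ)
    (hfix : ∀ t, hstar = (A t).mulVec hstar + (B t).mulVec ustar)
    (hfix1 : ∀ t, w1star = (C1 t).mulVec hstar + (D1 t).mulVec ustar)
    (hfix2 : ∀ t, w2star = (C2 t).mulVec hstar + (D2 t).mulVec ustar)
    (M1 : ℕ → Matrix (Fin p) (Fin p) ℝ) (M2 : ℕ → Matrix (Fin q) (Fin q) ℝ)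
    (hM1symm : ∀ t, (M1 t).IsSymm) (hM2symm : ∀ t, (M2 t).IsSymm)
    (hM1 : ∀ t, 0 ≤ (w1 t - w1star) ⬝ᵥ (M1 t).mulVec (w1 t - w1star))
    (hM2 : ∀ t, 0 ≤ (w2 t - w2star) ⬝ᵥ (M2 t).mulVec (w2 t - w2star))
    (P : Matrix (Fin n) (Fin n) ℝ) (hPsymm : P.IsSymm)
    (hPpos : ∀ v : Fin n → ℝ, v ≠ 0 → 0 < v ⬝ᵥ P.mulVec v)
    (τ β1 β2 : ℕ → ℝ)
    (hτ : ∀ t, τ t ∈ Set.Icc (0 : ℝ) 1)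
    (hβ1 : ∀ t, 0 ≤ β1 t) (hβ2 : ∀ t, 0 ≤ β2 t)
    (hLMI : ∀ t, ∀ v : Fin n ⊕ Fin m → ℝ,
      v ⬝ᵥ (Matrix.fromBlocks
          ((A t)ᵀ * P * A t - (τ t) ^ 2 • P) ((A t)ᵀ * P * B t)
          ((B t)ᵀ * P * A t) ((B t)ᵀ * P * B t)
        + (Matrix.fromBlocks (C1 t) (D1 t) (C2 t) (D2 t))ᵀ
          * Matrix.fromBlocks (β1 t • M1 t) 0 0 (β2 t • M2 t)
          * Matrix.fromBlocks (C1 t) (D1 t) (C2 t) (D2 t)).mulVec v ≤ 0) :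
    (∀ t, (h (t + 1) - hstar) ⬝ᵥ P.mulVec (h (t + 1) - hstar)
        ≤ (τ t) ^ 2 * ((h t - hstar) ⬝ᵥ P.mulVec (h t - hstar))) ∧
    ∀ lmin lmax : ℝ,
      IsLeast {μ : ℝ | ∃ v : Fin n → ℝ, v ≠ 0 ∧ P.mulVec v = μ • v} lmin →
      IsGreatest {μ : ℝ | ∃ v : Fin n → ℝ, v ≠ 0 ∧ P.mulVec v = μ • v} lmax →
      ∀ t : ℕ, Real.sqrt ((h t - hstar) ⬝ᵥ (h t - hstar))
          ≤ Real.sqrt (lmax / lmin) * (⨆ s, τ s) ^ t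
            * Real.sqrt ((h 0 - hstar) ⬝ᵥ (h 0 - hstar)) := by
  have step : ∀ t, (h (t + 1) - hstar) ⬝ᵥ P.mulVec (h (t + 1) - hstar)
        ≤ (τ t) ^ 2 * ((h t - hstar) ⬝ᵥ P.mulVec (h t - hstar)) := by
    intro t
    have e0 : h (t + 1) - hstar
        = (A t).mulVec (h t - hstar) + (B t).mulVec (u t - ustar) := by
      conv_lhs => rw [hdyn t, hfix t]
      rw [Matrix.mulVec_sub, Matrix.mulVec_sub]; abel
    have e1 : w1 t - w1star
        = (C1 t).mulVec (h t - hstar) + (D1 t).mulVec (u t - ustar) := by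
      rw [hw1 t, hfix1 t, Matrix.mulVec_sub, Matrix.mulVec_sub]; abel
    have e2 : w2 t - w2star
        = (C2 t).mulVec (h t - hstar) + (D2 t).mulVec (u t - ustar) := by
      rw [hw2 t, hfix2 t, Matrix.mulVec_sub, Matrix.mulVec_sub]; abel
    have key := hLMI t (Sum.elim (h t - hstar) (u t - ustar))
    have a1 := mul_nonneg (hβ1 t) (hM1 t)
    have a2 := mul_nonneg (hβ2 t) (hM2 t)
    rw [e1] at a1
    rw [e2] at a2
    rw [e0]
    generalize h t - hstar = x at *
    generalize u t - ustar = y at *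
    rw [Matrix.add_mulVec, dotProduct_add, ← Matrix.mulVec_mulVec, ← Matrix.mulVec_mulVec,
      Matrix.dotProduct_mulVec _ (Matrix.transpose _), Matrix.vecMul_transpose] at key
    simp only [Matrix.fromBlocks_mulVec, Sum.elim_comp_inl, Sum.elim_comp_inr,
      sumElim_dotProduct_sumElim, Matrix.sub_mulVec, Matrix.smul_mulVec, dotProduct_add,
      dotProduct_sub, dotProduct_smul, aux_quad, Matrix.zero_mulVec, dotProduct_zero,
      add_zero, zero_add, smul_eq_mul] at key
    simp only [Matrix.mulVec_add, dotProduct_add, add_dotProduct] at key a1 a2 ⊢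
    linarith
  refine ⟨step, ?_⟩
  intro lmin lmax hmin hmax t
  have hlo : ∀ v : Fin n → ℝ, lmin * (v ⬝ᵥ v) ≤ v ⬝ᵥ P.mulVec v := by
    intro v
    have := aux_psd (P - lmin • (1 : Matrix (Fin n) (Fin n) ℝ))
      (hPsymm.sub (Matrix.isSymm_one.smul lmin)) (by
        intro μ w hw hμ
        have : lmin ≤ μ + lmin := hmin.2 ⟨w, hw, by
          rw [Matrix.sub_mulVec, Matrix.smul_mulVec, Matrix.one_mulVec] at hμ
          rw [add_smul, ← hμ]; abel⟩
        linarith) v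
    rw [Matrix.sub_mulVec, Matrix.smul_mulVec, Matrix.one_mulVec, dotProduct_sub,
      dotProduct_smul, smul_eq_mul] at this
    linarith
  have hhi : ∀ v : Fin n → ℝ, v ⬝ᵥ P.mulVec v ≤ lmax * (v ⬝ᵥ v) := by
    intro v
    have := aux_psd (lmax • (1 : Matrix (Fin n) (Fin n) ℝ) - P)
      ((Matrix.isSymm_one.smul lmax).sub hPsymm) (by
        intro μ w hw hμ
        have : lmax - μ ≤ lmax := hmax.2 ⟨w, hw, by
          rw [Matrix.sub_mulVec, Matrix.smul_mulVec, Matrix.one_mulVec] at hμ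
          rw [sub_smul, ← hμ]; abel⟩
        linarith) v
    rw [Matrix.sub_mulVec, Matrix.smul_mulVec, Matrix.one_mulVec, dotProduct_sub,
      dotProduct_smul, smul_eq_mul] at this
    linarith
  have hnn : ∀ v : Fin n → ℝ, 0 ≤ v ⬝ᵥ v := fun v =>
    Finset.sum_nonneg fun i _ => mul_self_nonneg (v i)
  have hPnn : ∀ v : Fin n → ℝ, 0 ≤ v ⬝ᵥ P.mulVec v := by
    intro v
    by_cases hv : v = 0
    · simp [hv]
    · exact (hPpos v hv).le
  have hlpos : 0 < lmin := by
    obtain ⟨v, hv, hPv⟩ := hmin.1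
    have h1 := hPpos v hv
    rw [hPv, dotProduct_smul, smul_eq_mul] at h1
    exact pos_of_mul_pos_left h1 (hnn v)
  have hbdd : BddAbove (Set.range τ) := ⟨1, by rintro _ ⟨s, rfl⟩; exact (hτ s).2⟩
  have hle : ∀ s, τ s ≤ ⨆ s, τ s := fun s => le_ciSup hbdd s
  generalize (⨆ s, τ s) = T at *
  have hT : 0 ≤ T := (hτ 0).1.trans (hle 0)
  have hind : ∀ t, (h t - hstar) ⬝ᵥ P.mulVec (h t - hstar)
      ≤ (T ^ t) ^ 2 * ((h 0 - hstar) ⬝ᵥ P.mulVec (h 0 - hstar)) := by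
    intro t
    induction t with
    | zero => simp
    | succ k ih =>
      have h1 : τ k ^ 2 ≤ T ^ 2 := pow_le_pow_left₀ (hτ k).1 (hle k) 2
      calc _ ≤ _ := step k
        _ ≤ T ^ 2 * ((h k - hstar) ⬝ᵥ P.mulVec (h k - hstar)) :=
          mul_le_mul_of_nonneg_right h1 (hPnn _)
        _ ≤ T ^ 2 * ((T ^ k) ^ 2 * ((h 0 - hstar) ⬝ᵥ P.mulVec (h 0 - hstar))) :=
          mul_le_mul_of_nonneg_left ih (sq_nonneg T)
        _ = _ := by ring
  have hfin : (h t - hstar) ⬝ᵥ (h t - hstar)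
      ≤ lmax / lmin * (T ^ t) ^ 2 * ((h 0 - hstar) ⬝ᵥ (h 0 - hstar)) := by
    have h1 := (hlo (h t - hstar)).trans ((hind t).trans
      (mul_le_mul_of_nonneg_left (hhi (h 0 - hstar)) (sq_nonneg (T ^ t))))
    rw [div_mul_eq_mul_div, div_mul_eq_mul_div, le_div_iff₀ hlpos]
    linarith
  have hr := Real.sqrt_le_sqrt hfin
  rwa [Real.sqrt_mul' _ (hnn _), Real.sqrt_mul' _ (sq_nonneg _),
    Real.sqrt_sq (pow_nonneg hT t)] at hr
end

section
/- Let F ∈ ℝ^{M×N}, let f : ℝ^N → ℝ and g : ℝ^M → ℝ be convex and differentiable, and let Q₁ₓ, Q₂ₓ, Q₁z, Q₂z, χₓ, χz be strictly positive reals with χₓ(Q₁ₓ + Q₂ₓ) = 1 and χz(Q₁z + Q₂z) = 1. Suppose the vectors x̂₁, x̂₂, h₁ₓ, h₂ₓ ∈ ℝ^N and ẑ₁, ẑ₂, h₁z, h₂z ∈ ℝ^M satisfy the fixed-point equations of 2-layer MLVAMP: x̂₁ = Prox_{f/Q₁ₓ}(h₁ₓ); ẑ₁ = Prox_{g/Q₁z}(h₁z);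 ẑ₂ = F(Q₂z FᵀF + Q₂ₓ I)⁻¹(Q₂ₓ h₂ₓ + Q₂z Fᵀ h₂z); x̂₂ = (Q₂z FᵀF + Q₂ₓ I)⁻¹(Q₂ₓ h₂ₓ + Q₂z Fᵀ h₂z); h₂ₓ = (x̂₁/χₓ − Q₁ₓ h₁ₓ)/Q₂ₓ; h₁z = (ẑ₂/χz − Q₂z h₂z)/Q₁z; h₂z = (ẑ₁/χz − Q₁z h₁z)/Q₂z; h₁ₓ = (x̂₂/χₓ − Q₂ₓ h₂ₓ)/Q₁ₓ. Then x̂₁ = x̂₂, ẑ₁ = ẑ₂ = F x̂₁, and x̂₁ satisfies the first-order optimality condition of the generalized linear estimation problem: ∇f(x̂₁) + Fᵀ∇g(F x̂₁) = 0; in particular x̂₁ is a minimizer of x ↦ g(Fx) + f(x) over ℝ^N. -/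
open Matrix

lemma aux_line {n : ℕ} (f : (Fin n → ℝ) → ℝ) (d x v : Fin n → ℝ)
    (hd : HasFDerivAt f (∑ i, d i • (ContinuousLinearMap.proj i : (Fin n → ℝ) →L[ℝ] ℝ)) x) :
    HasDerivAt (fun t : ℝ => f (x + t • v)) (d ⬝ᵥ v) 0 := by
  have h1 : HasDerivAt (fun t : ℝ => x + t • v) v 0 := by
    simpa using ((hasDerivAt_id (0:ℝ)).smul_const v).const_add x
  have hd' : HasFDerivAt f (∑ i, d i • (ContinuousLinearMap.proj i : (Fin n → ℝ) →L[ℝ] ℝ))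
      (x + (0:ℝ) • v) := by simpa using hd
  have h2 := hd'.comp_hasDerivAt (0:ℝ) h1
  refine HasDerivAt.congr_deriv (f := fun t : ℝ => f (x + t • v)) h2 ?_
  simp [dotProduct]

lemma aux_prox {n : ℕ} (f : (Fin n → ℝ) → ℝ) (d x h : Fin n → ℝ) (Q : ℝ) (hQ : 0 < Q)
    (hd : HasFDerivAt f (∑ i, d i • (ContinuousLinearMap.proj i : (Fin n → ℝ) →L[ℝ] ℝ)) x)
    (hm : ∀ y : Fin n → ℝ, f x / Q + ((x - h) ⬝ᵥ (x - h)) / 2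
        ≤ f y / Q + ((y - h) ⬝ᵥ (y - h)) / 2) :
    d = Q • (h - x) := by
  have key : ∀ v : Fin n → ℝ, (d ⬝ᵥ v) / Q + (x - h) ⬝ᵥ v = 0 := by
    intro v
    have h1 := (aux_line f d x v hd).div_const Q
    have h2 : HasDerivAt (fun t : ℝ => ((x + t • v - h) ⬝ᵥ (x + t • v - h)) / 2)
        ((x - h) ⬝ᵥ v) 0 := by
      have e : (fun t : ℝ => ((x + t • v - h) ⬝ᵥ (x + t • v - h)) / 2) =
          fun t : ℝ => (((x - h) ⬝ᵥ (x - h)) + t * (2 * ((x - h) ⬝ᵥ v)) + t ^ 2 * (v ⬝ᵥ v)) / 2 := by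
        funext t
        have e1 : x + t • v - h = (x - h) + t • v := by abel
        rw [e1]
        simp only [add_dotProduct, dotProduct_add, smul_dotProduct, dotProduct_smul, smul_eq_mul]
        rw [dotProduct_comm v (x - h)]
        ring
      rw [e]
      have := (((((hasDerivAt_id (0:ℝ)).mul_const (2 * ((x - h) ⬝ᵥ v))).const_add
        ((x - h) ⬝ᵥ (x - h))).add (((hasDerivAt_id (0:ℝ)).pow 2).mul_const (v ⬝ᵥ v))).div_const 2)
      refine HasDerivAt.congr_deriv this ?_
      simp
    have h3 := h1.add h2
    refine IsLocalMin.hasDerivAt_eq_zero ?_ h3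
    refine Filter.Eventually.of_forall fun t => ?_
    simpa using hm (x + t • v)
  funext i
  have := key (Pi.single i 1)
  simp at this
  field_simp at this
  simp
  linarith

lemma aux_grad {n : ℕ} (f : (Fin n → ℝ) → ℝ) (d x : Fin n → ℝ) (hf : ConvexOn ℝ Set.univ f)
    (hd : HasFDerivAt f (∑ i, d i • (ContinuousLinearMap.proj i : (Fin n → ℝ) →L[ℝ] ℝ)) x)
    (y : Fin n → ℝ) : f x + d ⬝ᵥ (y - x) ≤ f y := by
  have h1 := aux_line f d x (y - x) hd
  have hc : ConvexOn ℝ Set.univ (fun t : ℝ => f (x + t • (y - x))) := by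
    have := hf.comp_affineMap (AffineMap.lineMap x y : ℝ →ᵃ[ℝ] (Fin n → ℝ))
    simpa [Function.comp_def, AffineMap.lineMap_apply, add_comm] using this
  have := hc.le_slope_of_hasDerivAt (Set.mem_univ 0) (Set.mem_univ 1) one_pos h1
  simp [slope_def_field] at this
  rw [dotProduct_sub]
  linarith

/-- At a fixed point of 2-layer MLVAMP (in the MAP setting) for the problem
`min_x g(Fx) + f(x)` with `f, g` convex and differentiable (with gradients `df`, `dg`),
one has `x̂₁ = x̂₂`, `ẑ₁ = ẑ₂ = F x̂₁`, the first-order optimality condition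
`∇f(x̂₁) + Fᵀ∇g(F x̂₁) = 0` holds, and `x̂₁` minimizes `x ↦ g(Fx) + f(x)`.
The proximal steps are encoded by their minimizing property. -/
theorem mlvamp_fixed_point_is_glm_minimizer
    (M N : ℕ) (F : Matrix (Fin M) (Fin N) ℝ)
    (f : (Fin N → ℝ) → ℝ) (g : (Fin M → ℝ) → ℝ)
    (hf : ConvexOn ℝ Set.univ f) (hg : ConvexOn ℝ Set.univ g)
    (df : (Fin N → ℝ) → Fin N → ℝ) (dg : (Fin M → ℝ) → Fin M → ℝ)
    (hdf : ∀ x : Fin N → ℝ, HasFDerivAt f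
      (∑ i, df x i • (ContinuousLinearMap.proj i : (Fin N → ℝ) →L[ℝ] ℝ)) x)
    (hdg : ∀ z : Fin M → ℝ, HasFDerivAt g
      (∑ j, dg z j • (ContinuousLinearMap.proj j : (Fin M → ℝ) →L[ℝ] ℝ)) z)
    (Q1x Q2x Q1z Q2z χx χz : ℝ)
    (hQ1x : 0 < Q1x) (hQ2x : 0 < Q2x) (hQ1z : 0 < Q1z) (hQ2z : 0 < Q2z)
    (hχx : 0 < χx) (hχz : 0 < χz)
    (hχxeq : χx * (Q1x + Q2x) = 1) (hχzeq : χz * (Q1z + Q2z) = 1)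
    (x1 x2 h1x h2x : Fin N → ℝ) (z1 z2 h1z h2z : Fin M → ℝ)
    -- x̂₁ = Prox_{f/Q₁ₓ}(h₁ₓ) :
    (hx1 : ∀ x : Fin N → ℝ,
      f x1 / Q1x + ((x1 - h1x) ⬝ᵥ (x1 - h1x)) / 2
        ≤ f x / Q1x + ((x - h1x) ⬝ᵥ (x - h1x)) / 2)
    -- ẑ₁ = Prox_{g/Q₁z}(h₁z) :
    (hz1 : ∀ z : Fin M → ℝ,
      g z1 / Q1z + ((z1 - h1z) ⬝ᵥ (z1 - h1z)) / 2
        ≤ g z / Q1z + ((z - h1z) ⬝ᵥ (z - h1z)) / 2)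
    -- LMMSE steps :
    (hz2 : z2 = F.mulVec ((Q2z • (Fᵀ * F) + Q2x • (1 : Matrix (Fin N) (Fin N) ℝ))⁻¹.mulVec
      (Q2x • h2x + Q2z • Fᵀ.mulVec h2z)))
    (hx2 : x2 = (Q2z • (Fᵀ * F) + Q2x • (1 : Matrix (Fin N) (Fin N) ℝ))⁻¹.mulVec
      (Q2x • h2x + Q2z • Fᵀ.mulVec h2z))
    -- update equations at the fixed point :
    (hh2x : h2x = Q2x⁻¹ • (χx⁻¹ • x1 - Q1x • h1x))
    (hh1z : h1z = Q1z⁻¹ • (χz⁻¹ • z2 - Q2z • h2z))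
    (hh2z : h2z = Q2z⁻¹ • (χz⁻¹ • z1 - Q1z • h1z))
    (hh1x : h1x = Q1x⁻¹ • (χx⁻¹ • x2 - Q2x • h2x)) :
    x1 = x2 ∧ z1 = F.mulVec x1 ∧ z2 = F.mulVec x1 ∧
    df x1 + Fᵀ.mulVec (dg (F.mulVec x1)) = 0 ∧
    ∀ x : Fin N → ℝ, g (F.mulVec x1) + f x1 ≤ g (F.mulVec x) + f x := by
  have ex : x1 = x2 := by
    funext i
    have a := congrFun hh2x i
    have b := congrFun hh1x i
    simp at a b
    field_simp at a b
    nlinarith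
  have ez : z1 = z2 := by
    funext i
    have a := congrFun hh2z i
    have b := congrFun hh1z i
    simp at a b
    field_simp at a b
    nlinarith
  have ezF : z2 = F.mulVec x2 := by rw [hz2, hx2]
  have hpd : (Q2z • (Fᵀ * F) + Q2x • (1 : Matrix (Fin N) (Fin N) ℝ)).PosDef := by
    refine Matrix.PosDef.posSemidef_add ?_ (Matrix.PosDef.one.smul hQ2x)
    have := (Matrix.posSemidef_conjTranspose_mul_self F).smul hQ2z.le
    simpa [Matrix.conjTranspose_eq_transpose_of_trivial] using this
  have hlin : (Q2z • (Fᵀ * F) + Q2x • (1 : Matrix (Fin N) (Fin N) ℝ)).mulVec x2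
      = Q2x • h2x + Q2z • Fᵀ.mulVec h2z := by
    rw [hx2, Matrix.mulVec_mulVec, Matrix.mul_nonsing_inv _
      ((Matrix.isUnit_iff_isUnit_det _).1 hpd.isUnit), Matrix.one_mulVec]
  have pf := aux_prox f (df x1) x1 h1x Q1x hQ1x (hdf x1) hx1
  have pg := aux_prox g (dg z1) z1 h1z Q1z hQ1z (hdg z1) hz1
  have hχx' : χx⁻¹ = Q1x + Q2x := inv_eq_of_mul_eq_one_right hχxeq
  have hχz' : χz⁻¹ = Q1z + Q2z := inv_eq_of_mul_eq_one_right hχzeq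
  have pf' : df x1 = Q2x • (x1 - h2x) := by
    rw [pf]
    funext i
    have a := congrFun hh2x i
    simp [hχx'] at a ⊢
    field_simp at a
    linarith
  have pg' : dg z1 = Q2z • (z1 - h2z) := by
    rw [pg]
    funext i
    have a := congrFun hh2z i
    simp [hχz'] at a ⊢
    field_simp at a
    linarith
  have ezF1 : z1 = F.mulVec x1 := by rw [ez, ezF, ex]
  have opt : df x1 + Fᵀ.mulVec (dg (F.mulVec x1)) = 0 := by
    rw [← ezF1, pf', pg', Matrix.mulVec_smul, Matrix.mulVec_sub]
    rw [← ex, Matrix.add_mulVec, Matrix.smul_mulVec, Matrix.smul_mulVec, Matrix.one_mulVec,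
      ← Matrix.mulVec_mulVec, ← ezF1] at hlin
    rw [smul_sub, smul_sub]
    linear_combination (exp := 1) hlin
  refine ⟨ex, ezF1, by rw [← ez, ezF1], opt, fun x => ?_⟩
  have a := aux_grad f (df x1) x1 hf (hdf x1) x
  have b := aux_grad g (dg (F.mulVec x1)) (F.mulVec x1) hg (hdg _) (F.mulVec x)
  rw [← Matrix.mulVec_sub, Matrix.dotProduct_mulVec, ← Matrix.mulVec_transpose] at b
  have c : (df x1 + Fᵀ.mulVec (dg (F.mulVec x1))) ⬝ᵥ (x - x1) = 0 := by rw [opt]; simp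
  rw [add_dotProduct] at c
  linarith
end

section
/- Let f : ℝ^n → ℝ be convex and twice continuously differentiable, and let γ > 0. Then Prox_{γf} : ℝ^n → ℝ^n is differentiable at every point x ∈ ℝ^n, the matrix I + γ·∇²f(Prox_{γf}(x)) is invertible (where ∇²f denotes the Hessian of f), and the Jacobian of Prox_{γf} at x equals (I + γ·∇²f(Prox_{γf}(x)))⁻¹. -/
open Topology in
/-- First-order convexity inequality. -/
theorem prox_aux_first_order {n : ℕ} {f : EuclideanSpace ℝ (Fin n) → ℝ}
    (hconv : ConvexOn ℝ Set.univ f)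
    {g x : EuclideanSpace ℝ (Fin n)} (hg : HasGradientAt f g x)
    (y : EuclideanSpace ℝ (Fin n)) : f x + inner ℝ g (y - x) ≤ f y := by
  have hc : ConvexOn ℝ Set.univ (f ∘ (AffineMap.lineMap x y : ℝ →ᵃ[ℝ] _)) := by
    simpa using hconv.comp_affineMap (AffineMap.lineMap x y : ℝ →ᵃ[ℝ] _)
  have hd : HasDerivAt (f ∘ (AffineMap.lineMap x y : ℝ →ᵃ[ℝ] _)) (inner ℝ g (y - x)) 0 := by
    have h1 := AffineMap.hasDerivAt_lineMap (𝕜 := ℝ) (a := x) (b := y) (x := 0)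
    have h2 : HasFDerivAt f (InnerProductSpace.toDual ℝ _ g)
        ((AffineMap.lineMap x y : ℝ →ᵃ[ℝ] _) (0:ℝ)) := by
      simpa using hg.hasFDerivAt
    simpa using h2.comp_hasDerivAt (0:ℝ) h1
  have h := hc.le_slope_of_hasDerivAt (Set.mem_univ 0) (Set.mem_univ 1) one_pos hd
  simp [slope_def_field] at h
  linarith

/-- Derivative of a real function with `0 ≤ t * (φ t - φ 0)` is nonnegative at `0`. -/
theorem prox_aux_deriv_nonneg {φ : ℝ → ℝ} {d : ℝ} (hφ : HasDerivAt φ d 0)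
    (h : ∀ t, 0 ≤ t * (φ t - φ 0)) : 0 ≤ d := by
  have ht := hφ.tendsto_slope
  refine ge_of_tendsto ht ?_
  filter_upwards [self_mem_nhdsWithin] with t ht0
  have ht0' : t ≠ 0 := ht0
  rw [slope_def_field, sub_zero]
  have : (φ t - φ 0) / t = t * (φ t - φ 0) / t ^ 2 := by field_simp
  rw [this]
  exact div_nonneg (h t) (sq_nonneg t)

/-- For convex, twice continuously differentiable `f : ℝⁿ → ℝ` (with gradient
`grad` and Hessian `hess`) and `γ > 0`, the proximal operator `P = Prox_{γf}` (hypothesized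
via its minimizing property) is differentiable everywhere, `I + γ·∇²f(P x)` is invertible,
and the Jacobian of `P` at `x` is `(I + γ·∇²f(P x))⁻¹`. -/
theorem jacobian_of_prox
    (n : ℕ) (f : EuclideanSpace ℝ (Fin n) → ℝ)
    (hconv : ConvexOn ℝ Set.univ f) (hf : ContDiff ℝ 2 f)
    (grad : EuclideanSpace ℝ (Fin n) → EuclideanSpace ℝ (Fin n))
    (hgrad : ∀ x, HasGradientAt f (grad x) x)
    (hess : EuclideanSpace ℝ (Fin n) →
      EuclideanSpace ℝ (Fin n) →L[ℝ] EuclideanSpace ℝ (Fin n))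
    (hhess : ∀ x, HasFDerivAt grad (hess x) x)
    (hhesscont : Continuous hess)
    (γ : ℝ) (hγ : 0 < γ)
    (P : EuclideanSpace ℝ (Fin n) → EuclideanSpace ℝ (Fin n))
    (hP : ∀ z x : EuclideanSpace ℝ (Fin n),
      γ * f (P z) + ‖P z - z‖ ^ 2 / 2 ≤ γ * f x + ‖x - z‖ ^ 2 / 2) :
    ∀ x : EuclideanSpace ℝ (Fin n),
      ∃ J : EuclideanSpace ℝ (Fin n) →L[ℝ] EuclideanSpace ℝ (Fin n),
        HasFDerivAt P J x ∧
        (ContinuousLinearMap.id ℝ (EuclideanSpace ℝ (Fin n)) + γ • hess (P x)).comp J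
          = ContinuousLinearMap.id ℝ (EuclideanSpace ℝ (Fin n)) ∧
        J.comp (ContinuousLinearMap.id ℝ (EuclideanSpace ℝ (Fin n)) + γ • hess (P x))
          = ContinuousLinearMap.id ℝ (EuclideanSpace ℝ (Fin n)) := by
  have hmono : ∀ x y, 0 ≤ inner ℝ (grad y - grad x) (y - x) := by
    intro x y
    have h1 := prox_aux_first_order hconv (hgrad x) y
    have h2 := prox_aux_first_order hconv (hgrad y) x
    have h3 : inner ℝ (grad y) (x - y) = - inner ℝ (grad y) (y - x) := by
      rw [← inner_neg_right, neg_sub]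
    rw [inner_sub_left]
    linarith
  have hpsd : ∀ x v, 0 ≤ inner ℝ (hess x v) v := by
    intro x v
    have hl : HasDerivAt (fun t : ℝ => x + t • v) v 0 := by
      simpa using ((hasDerivAt_id (0:ℝ)).smul_const v).const_add x
    have h0 : HasFDerivAt grad (hess x) (x + (0:ℝ) • v) := by simpa using hhess x
    have h1 : HasDerivAt (fun t : ℝ => grad (x + t • v)) (hess x v) 0 :=
      h0.comp_hasDerivAt (0:ℝ) hl
    have h2 : HasDerivAt (fun t : ℝ => inner ℝ (grad (x + t • v)) v)
        (inner ℝ (hess x v) v) 0 := by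
      simpa using h1.inner ℝ (hasDerivAt_const (0:ℝ) v)
    refine prox_aux_deriv_nonneg h2 fun t => ?_
    have := hmono x (x + t • v)
    simpa [inner_smul_right, inner_sub_left] using this
  have hopt : ∀ z, P z + γ • grad (P z) = z := by
    intro z
    have hd : HasFDerivAt (fun x => γ * f x + ‖x - z‖ ^ 2 / 2)
        (InnerProductSpace.toDual ℝ _ (P z + γ • grad (P z) - z)) (P z) := by
      have h1 := (hgrad (P z)).hasFDerivAt.const_mul γ
      have h2 := (((hasFDerivAt_id (𝕜 := ℝ) (P z)).sub_const z).norm_sq).mul_const (1/2 : ℝ)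
      have h3 := h1.add h2
      have e1 : (fun x => γ * f x + ‖x - z‖ ^ 2 / 2)
          = (fun y => γ * f y) + fun y => ‖id y - z‖ ^ 2 * (1 / 2) := by
        ext x
        simp only [Pi.add_apply, id_eq]
        ring
      rw [e1]
      refine h3.congr_fderiv ?_
      ext v
      simp [inner_add_left, inner_sub_left, inner_smul_left]
      ring
    have hmin : IsLocalMin (fun x => γ * f x + ‖x - z‖ ^ 2 / 2) (P z) :=
      Filter.Eventually.of_forall (hP z)
    have h := hmin.hasFDerivAt_eq_zero hd
    rw [map_eq_zero_iff _ (InnerProductSpace.toDual ℝ _).injective] at h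
    exact sub_eq_zero.mp h
  have hlip : LipschitzWith 1 P := by
    refine LipschitzWith.of_dist_le_mul fun x y => ?_
    rw [dist_eq_norm, dist_eq_norm, NNReal.coe_one, one_mul]
    have h1 : x - y = (P x - P y) + γ • (grad (P x) - grad (P y)) := by
      conv_lhs => rw [← hopt x, ← hopt y]
      rw [smul_sub]; abel
    have h2 : ‖P x - P y‖ * ‖P x - P y‖ ≤ inner ℝ (x - y) (P x - P y) := by
      rw [h1, inner_add_left, real_inner_self_eq_norm_mul_norm, inner_smul_left]
      have := mul_nonneg hγ.le (hmono (P y) (P x))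
      simpa using this
    have h3 := h2.trans (real_inner_le_norm _ _)
    by_contra! hlt
    have hpos : 0 < ‖P x - P y‖ := (norm_nonneg _).trans_lt hlt
    exact absurd (le_of_mul_le_mul_right h3 hpos) (not_le.mpr hlt)
  intro x
  let A := ContinuousLinearMap.id ℝ (EuclideanSpace ℝ (Fin n)) + γ • hess (P x)
  have hinj : Function.Injective A.toLinearMap := by
    rw [← LinearMap.ker_eq_bot, LinearMap.ker_eq_bot']
    intro v hv
    have hv' : v + γ • hess (P x) v = 0 := by simpa [A] using hv
    have h1 : inner ℝ (v + γ • hess (P x) v) v = 0 := by rw [hv', inner_zero_left]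
    rw [inner_add_left, inner_smul_left] at h1
    have h2 := mul_nonneg hγ.le (hpsd (P x) v)
    have h3 : ‖v‖ ^ 2 + γ * inner ℝ (hess (P x) v) v = 0 := by simpa using h1
    have h4 : ‖v‖ ^ 2 = 0 := le_antisymm (by linarith) (sq_nonneg _)
    simpa using h4
  let e := (LinearEquiv.ofInjectiveEndo A.toLinearMap hinj).toContinuousLinearEquiv
  have he : (e : EuclideanSpace ℝ (Fin n) →L[ℝ] EuclideanSpace ℝ (Fin n)) = A := by
    ext v; rfl
  have hA : HasFDerivAt (fun y => y + γ • grad y)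
      (e : EuclideanSpace ℝ (Fin n) →L[ℝ] EuclideanSpace ℝ (Fin n)) (P x) := by
    rw [he]
    exact (hasFDerivAt_id (P x)).add ((hhess (P x)).const_smul γ)
  refine ⟨e.symm, HasFDerivAt.of_local_left_inverse hlip.continuous.continuousAt hA
    (Filter.Eventually.of_forall hopt), ?_, ?_⟩
  · change A.comp _ = _
    rw [← he]; exact e.coe_comp_coe_symm
  · change ContinuousLinearMap.comp _ A = _
    rw [← he]; exact e.coe_symm_comp_coe
end

section
/- Let σ ≥ 0 and let f : ℝ^n → ℝ be convex, continuous, and σ-strongly convex (i.e. f − (σ/2)‖·‖₂² is convex). Let γ > 0 and a ≥ 0. Then the operator x ↦ a·Prox_{γf}(x) − x is Lipschitz with constant max(1, a/(1 + γσ) − 1): for all x, y ∈ ℝ^n, ‖(a·Prox_{γf}(x) − x) − (a·Prox_{γf}(y) − y)‖₂ ≤ max(1, a/(1 + γσ) − 1)·‖x − y‖₂. -/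
theorem prox_aux_norm {E : Type*} [NormedAddCommGroup E] [InnerProductSpace ℝ E]
    (p w : E) (t : ℝ) :
    ‖(1 - t) • p + t • w‖ ^ 2
      = (1 - t) * ‖p‖ ^ 2 + t * ‖w‖ ^ 2 - t * (1 - t) * ‖w - p‖ ^ 2 := by
  simp only [← real_inner_self_eq_norm_sq, inner_add_left, inner_add_right, inner_sub_left,
    inner_sub_right, real_inner_smul_left, real_inner_smul_right, real_inner_comm p w]
  ring

theorem prox_aux_four {E : Type*} [NormedAddCommGroup E] [InnerProductSpace ℝ E]
    (p q x y : E) :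
    ‖q - x‖ ^ 2 / 2 + ‖p - y‖ ^ 2 / 2 - ‖p - x‖ ^ 2 / 2 - ‖q - y‖ ^ 2 / 2
      = inner ℝ (p - q) (x - y) := by
  simp only [norm_sub_sq_real, inner_sub_left, inner_sub_right]
  ring

theorem prox_aux_lim (G K : ℝ) (hK : 0 ≤ K)
    (h : ∀ t : ℝ, 0 < t → t < 1 → (1 - t) * K ≤ G) : K ≤ G := by
  by_contra! hlt
  have hG : 0 ≤ G := by
    have := h (1 / 2) (by norm_num) (by norm_num)
    linarith
  have hK' : 0 < K := by linarith
  have h1 := h ((K - G) / (2 * K)) (div_pos (by linarith) (by linarith))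
    (by rw [div_lt_one (by linarith)]; linarith)
  have h2 : (1 - (K - G) / (2 * K)) * K = (K + G) / 2 := by
    field_simp
    ring
  linarith

theorem prox_aux_strong {E : Type*} [NormedAddCommGroup E] [InnerProductSpace ℝ E]
    (σ : ℝ) (hσ : 0 ≤ σ) (f : E → ℝ)
    (hstrong : ConvexOn ℝ Set.univ (fun x => f x - σ / 2 * ‖x‖ ^ 2))
    (γ : ℝ) (hγ : 0 < γ) (p z : E)
    (hP : ∀ x : E, γ * f p + ‖p - z‖ ^ 2 / 2 ≤ γ * f x + ‖x - z‖ ^ 2 / 2) (w : E) :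
    (1 + γ * σ) / 2 * ‖w - p‖ ^ 2
      ≤ (γ * f w + ‖w - z‖ ^ 2 / 2) - (γ * f p + ‖p - z‖ ^ 2 / 2) := by
  apply prox_aux_lim _ _ (by positivity)
  intro t ht0 ht1
  have h1 := hP ((1 - t) • p + t • w)
  have h2 := hstrong.2 (Set.mem_univ p) (Set.mem_univ w)
    (sub_nonneg.2 ht1.le) ht0.le (sub_add_cancel 1 t)
  simp only [smul_eq_mul] at h2
  rw [prox_aux_norm p w t] at h2
  have h3 : (1 - t) • p + t • w - z = (1 - t) • (p - z) + t • (w - z) := by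
    module
  rw [h3, prox_aux_norm (p - z) (w - z) t, sub_sub_sub_cancel_right] at h1
  have h4 := mul_le_mul_of_nonneg_left h2 hγ.le
  refine le_of_mul_le_mul_left ?_ ht0
  linear_combination h1 + h4

/-- For `σ ≥ 0`, a convex continuous `σ`-strongly convex `f : ℝⁿ → ℝ`,
`γ > 0` and `a ≥ 0`, the operator `x ↦ a·Prox_{γf}(x) − x` is Lipschitz with constant
`max(1, a/(1 + γσ) − 1)`. Here `P` is hypothesized to be the proximal operator of `γf`,
i.e. `P z` minimizes `x ↦ γ f x + ‖x − z‖²/2`. -/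
theorem prox_scaled_sub_id_lipschitz_strongly_convex
    (n : ℕ) (σ : ℝ) (hσ : 0 ≤ σ)
    (f : EuclideanSpace ℝ (Fin n) → ℝ)
    (hconv : ConvexOn ℝ Set.univ f) (hcont : Continuous f)
    (hstrong : ConvexOn ℝ Set.univ (fun x => f x - σ / 2 * ‖x‖ ^ 2))
    (γ a : ℝ) (hγ : 0 < γ) (ha : 0 ≤ a)
    (P : EuclideanSpace ℝ (Fin n) → EuclideanSpace ℝ (Fin n))
    (hP : ∀ z x : EuclideanSpace ℝ (Fin n),
      γ * f (P z) + ‖P z - z‖ ^ 2 / 2 ≤ γ * f x + ‖x - z‖ ^ 2 / 2) :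
    ∀ x y : EuclideanSpace ℝ (Fin n),
      ‖(a • P x - x) - (a • P y - y)‖ ≤ max 1 (a / (1 + γ * σ) - 1) * ‖x - y‖ := by
  intro x y
  have hc : 0 < 1 + γ * σ := by positivity
  have hx := prox_aux_strong σ hσ f hstrong γ hγ (P x) x (hP x) (P y)
  have hy := prox_aux_strong σ hσ f hstrong γ hγ (P y) y (hP y) (P x)
  have h4 := prox_aux_four (P x) (P y) x y
  rw [norm_sub_rev (P y) (P x)] at hx
  have e : (a • P x - x) - (a • P y - y) = a • (P x - P y) - (x - y) := by
    module
  rw [e]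
  generalize P x - P y = u at *
  generalize x - y = d at *
  generalize hcd : 1 + γ * σ = c at *
  have key : c * ‖u‖ ^ 2 ≤ inner ℝ u d := by linarith
  have hcs := real_inner_le_norm u d
  have hs0 : 0 ≤ inner ℝ u d := le_trans (by positivity) key
  have hsq : ‖a • u - d‖ ^ 2 = a ^ 2 * ‖u‖ ^ 2 - 2 * a * inner ℝ u d + ‖d‖ ^ 2 := by
    rw [norm_sub_sq_real, norm_smul, real_inner_smul_left, mul_pow, Real.norm_eq_abs, sq_abs]
    ring
  generalize inner ℝ u d = s at *
  have hu : ‖u‖ ^ 2 ≤ s / c := by rw [le_div_iff₀ hc]; linarith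
  have hcu : c * ‖u‖ ≤ ‖d‖ := by
    by_contra! hlt
    have hup : 0 < ‖u‖ := by
      by_contra! h0
      have : ‖u‖ = 0 := le_antisymm h0 (norm_nonneg _)
      rw [this] at hlt
      linarith [norm_nonneg d]
    nlinarith
  have hs : c * s ≤ ‖d‖ ^ 2 := by
    nlinarith [norm_nonneg d]
  obtain ⟨b, rfl⟩ : ∃ b, a = b * c := ⟨a / c, by field_simp⟩
  rw [mul_div_assoc, div_self hc.ne', mul_one]
  have hb : 0 ≤ b := nonneg_of_mul_nonneg_left ha hc
  have hbound : ‖(b * c) • u - d‖ ^ 2 ≤ b * (b - 2) * (c * s) + ‖d‖ ^ 2 := by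
    rw [hsq]
    have := mul_le_mul_of_nonneg_left key (by positivity : 0 ≤ b ^ 2 * c)
    linear_combination this
  have hcs0 : 0 ≤ c * s := by positivity
  have hm : 0 ≤ max 1 (b - 1) := le_trans zero_le_one (le_max_left _ _)
  refine (sq_le_sq₀ (norm_nonneg _) (mul_nonneg hm (norm_nonneg _))).1 ?_
  rw [mul_pow]
  rcases le_total b 2 with h | h
  · rw [max_eq_left (by linarith)]
    nlinarith [mul_nonneg (mul_nonneg hb (sub_nonneg.2 h)) hcs0]
  · rw [max_eq_right (by linarith)]
    have := mul_le_mul_of_nonneg_left hs (mul_nonneg hb (sub_nonneg.2 h))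
    linear_combination hbound + this
end

section
/- Let 0 < σ < β, and let f : ℝ^n → ℝ be σ-strongly convex and β-smooth (i.e. both f − (σ/2)‖·‖₂² and (β/2)‖·‖₂² − f are convex). Let γ > 0 and a > 0. Then the operator x ↦ a·Prox_{γf}(x) − x is Lipschitz with constant max( a/(1 + γσ) − 1 , 1 − a/(1 + γβ) ): for all x, y ∈ ℝ^n, ‖(a·Prox_{γf}(x) − x) − (a·Prox_{γf}(y) − y)‖₂ ≤ max( a/(1 + γσ) − 1 , 1 − a/(1 + γβ) )·‖x − y‖₂. -/
section Helpers
variable {E : Type*} [NormedAddCommGroup E] [InnerProductSpace ℝ E]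

/-- If `A ≤ t * C` for all `t ∈ (0,1)` then `A ≤ 0`. -/
lemma aux_limit (A C : ℝ) (h : ∀ t : ℝ, 0 < t → t < 1 → A ≤ t * C) : A ≤ 0 := by
  by_contra hA
  push Not at hA
  have hpos : 0 < 2 * (|C| + A) := by positivity
  have h1 := h (A / (2 * (|C| + A))) (by positivity)
    (by rw [div_lt_one hpos]; linarith [abs_nonneg C])
  rw [div_mul_eq_mul_div, le_div_iff₀ hpos] at h1
  nlinarith [le_abs_self C, abs_nonneg C]

lemma aux_sub (k : E → ℝ) (hk : ConvexOn ℝ Set.univ k) (p c : E) (M : ℝ)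
    (h : ∀ w, k p + inner ℝ c (w - p) - M * ‖w - p‖ ^ 2 ≤ k w) (w : E) :
    k p + inner ℝ c (w - p) ≤ k w := by
  have := aux_limit (k p + inner ℝ c (w - p) - k w) (M * ‖w - p‖ ^ 2) (fun t ht ht1 => by
    have h1 := h (p + t • (w - p))
    have h2 := hk.2 (Set.mem_univ p) (Set.mem_univ w) (by linarith : 0 ≤ 1 - t) ht.le (by ring)
    have e : (1 - t) • p + t • w = p + t • (w - p) := by module
    rw [e] at h2
    simp only [add_sub_cancel_left, inner_smul_right, norm_smul, smul_eq_mul, mul_pow,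
      Real.norm_eq_abs, sq_abs] at h1 h2
    refine le_of_mul_le_mul_left ?_ ht
    nlinarith)
  linarith

lemma aux_super (k : E → ℝ) (hk : ConvexOn ℝ Set.univ k) (p c : E) (M : ℝ)
    (h : ∀ w, k w ≤ k p + inner ℝ c (w - p) + M * ‖w - p‖ ^ 2) (w : E) :
    k p + inner ℝ c (w - p) ≤ k w := by
  have := aux_limit (k p + inner ℝ c (w - p) - k w) (M * ‖w - p‖ ^ 2) (fun t ht ht1 => by
    have h1 := h (p - t • (w - p))
    have h2 := hk.2 (Set.mem_univ w) (Set.mem_univ (p - t • (w - p)))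
      (by positivity : 0 ≤ t / (1 + t)) (by positivity : 0 ≤ 1 / (1 + t)) (by field_simp; ring)
    have ht0 : (1 + t) ≠ 0 := by positivity
    have e : (t / (1 + t)) • w + (1 / (1 + t)) • (p - t • (w - p)) = p := by
      match_scalars <;> field_simp <;> ring
    rw [e] at h2
    have e2 : p - t • (w - p) - p = -(t • (w - p)) := by abel
    simp only [e2, inner_neg_right, norm_neg, inner_smul_right, norm_smul, smul_eq_mul, mul_pow,
      Real.norm_eq_abs, sq_abs] at h1 h2
    have h3 : (1 + t) * k p ≤ t * k w + k (p - t • (w - p)) := by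
      have := mul_le_mul_of_nonneg_left h2 (by positivity : 0 ≤ 1 + t)
      have e3 : (1 + t) * (t / (1 + t) * k w + 1 / (1 + t) * k (p - t • (w - p)))
        = t * k w + k (p - t • (w - p)) := by field_simp
      linarith
    refine le_of_mul_le_mul_left ?_ ht
    nlinarith)
  linarith

lemma aux_coco (k : E → ℝ) (p q u v : E) (L : ℝ) (hL : 0 < L)
    (lp : ∀ w, k p + inner ℝ u (w - p) ≤ k w) (lq : ∀ w, k q + inner ℝ v (w - q) ≤ k w)
    (up : ∀ w, k w ≤ k p + inner ℝ u (w - p) + L / 2 * ‖w - p‖ ^ 2)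
    (uq : ∀ w, k w ≤ k q + inner ℝ v (w - q) + L / 2 * ‖w - q‖ ^ 2) :
    0 ≤ inner ℝ (u - v) (L • (p - q) - (u - v)) := by
  have h1 := (lp (q + L⁻¹ • (u - v))).trans (uq _)
  have h2 := (lq (p - L⁻¹ • (u - v))).trans (up _)
  have e1 : q + L⁻¹ • (u - v) - p = L⁻¹ • (u - v) - (p - q) := by abel
  have e2 : p - L⁻¹ • (u - v) - q = (p - q) - L⁻¹ • (u - v) := by abel
  have e3 : p - L⁻¹ • (u - v) - p = - (L⁻¹ • (u - v)) := by abel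
  rw [e1, add_sub_cancel_left] at h1
  rw [e2, e3] at h2
  have e4 : inner ℝ (u - v) (u - v) = ‖u - v‖ ^ 2 := real_inner_self_eq_norm_sq _
  have e5 : ∀ z, inner ℝ (u - v) z = inner ℝ u z - inner ℝ v z := fun z => inner_sub_left _ _ _
  rw [inner_sub_right, inner_smul_right, e4]
  have e6 := e5 (u - v)
  have e7 := e5 (p - q)
  rw [e4] at e6
  simp only [inner_sub_right _ (p - q) (L⁻¹ • (u - v)), inner_sub_right _ (L⁻¹ • (u - v)) (p - q),
    inner_neg_right, norm_neg, inner_smul_right, norm_smul, mul_pow,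
    Real.norm_eq_abs, sq_abs] at h1 h2
  rw [e7]
  have h3 : L⁻¹ * ‖u - v‖ ^ 2 ≤ inner ℝ u (p - q) - inner ℝ v (p - q) := by
    have e8 : L / 2 * (L⁻¹ ^ 2 * ‖u - v‖ ^ 2) = L⁻¹ * ‖u - v‖ ^ 2 / 2 := by field_simp
    rw [e8] at h1 h2
    have : L⁻¹ * ‖u - v‖ ^ 2 = L⁻¹ * inner ℝ u (u - v) - L⁻¹ * inner ℝ v (u - v) := by
      rw [e6]; ring
    linarith
  have h4 := mul_le_mul_of_nonneg_left h3 hL.le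
  rw [mul_inv_cancel_left₀ hL.ne'] at h4
  linarith

lemma aux_final (d e : E) (S B a : ℝ) (hS : 0 < S) (hSB : S < B) (ha : 0 < a)
    (h : 0 ≤ inner ℝ (e - S • d) (B • d - e)) :
    ‖a • d - e‖ ≤ max (a / S - 1) (1 - a / B) * ‖e‖ := by
  have hB : 0 < B := hS.trans hSB
  set l := a / S - 1 with hl
  set m := 1 - a / B with hm
  have hlm : 0 < l + m := by
    have : a / B < a / S := div_lt_div_of_pos_left ha hS hSB
    linarith
  -- with r = a d - e : ⟪l e - r, r + m e⟫ ≥ 0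
  set r := a • d - e with hr
  have h1 : 0 ≤ inner ℝ (l • e - r) (r + m • e) := by
    have e1 : l • e - r = (a / S) • (e - S • d) := by
      rw [hr, hl]; match_scalars <;> field_simp <;> ring
    have e2 : r + m • e = (a / B) • (B • d - e) := by
      rw [hr, hm]; match_scalars <;> field_simp <;> ring
    rw [e1, e2, inner_smul_left, inner_smul_right]
    simp only [conj_trivial]
    positivity
  have hM : 0 < max l m := by
    rcases le_total l m with h | h
    · rw [max_eq_right h]; linarith
    · rw [max_eq_left h]; linarith
  refine le_of_sq_le_sq ?_ (by positivity)
  rw [mul_pow]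
  have h2 : ‖r‖ ^ 2 ≤ l * m * ‖e‖ ^ 2 + (l - m) * inner ℝ e r := by
    simp only [inner_sub_left, inner_add_right, inner_smul_left, inner_smul_right, conj_trivial,
      real_inner_self_eq_norm_sq, real_inner_comm e r] at h1
    have := real_inner_comm e r
    nlinarith
  have hc := abs_le.1 (abs_real_inner_le_norm e r)
  have hn := norm_nonneg e
  have hn' := norm_nonneg r
  rcases le_total l m with h | h
  · rw [max_eq_right h]
    have h3 : ‖r‖ ^ 2 ≤ l * m * ‖e‖ ^ 2 + (m - l) * (‖e‖ * ‖r‖) := by nlinarith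
    have h4 : (‖r‖ - m * ‖e‖) * (‖r‖ + l * ‖e‖) ≤ 0 := by linarith
    have : ‖r‖ ≤ m * ‖e‖ := by
      by_contra hh
      push Not at hh
      have : 0 < ‖r‖ + l * ‖e‖ := by nlinarith
      nlinarith
    nlinarith
  · rw [max_eq_left h]
    have h3 : ‖r‖ ^ 2 ≤ l * m * ‖e‖ ^ 2 + (l - m) * (‖e‖ * ‖r‖) := by nlinarith
    have h4 : (‖r‖ - l * ‖e‖) * (‖r‖ + m * ‖e‖) ≤ 0 := by linarith
    have : ‖r‖ ≤ l * ‖e‖ := by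
      by_contra hh
      push Not at hh
      have : 0 < ‖r‖ + m * ‖e‖ := by nlinarith
      nlinarith
    nlinarith

lemma aux_bounds (σ β γ : ℝ) (hγ : 0 < γ) (f : E → ℝ)
    (hstrong : ConvexOn ℝ Set.univ (fun x => f x - σ / 2 * ‖x‖ ^ 2))
    (hsmooth : ConvexOn ℝ Set.univ (fun x => β / 2 * ‖x‖ ^ 2 - f x))
    (z p : E) (hp : ∀ x, γ * f p + ‖p - z‖ ^ 2 / 2 ≤ γ * f x + ‖x - z‖ ^ 2 / 2) :
    (∀ w, γ * (f p - σ / 2 * ‖p‖ ^ 2) + inner ℝ (z - p - (γ * σ) • p) (w - p)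
      ≤ γ * (f w - σ / 2 * ‖w‖ ^ 2)) ∧
    (∀ w, γ * (f w - σ / 2 * ‖w‖ ^ 2) ≤
      γ * (f p - σ / 2 * ‖p‖ ^ 2) + inner ℝ (z - p - (γ * σ) • p) (w - p)
        + (γ * β - γ * σ) / 2 * ‖w - p‖ ^ 2) := by
  have hw : ∀ w, ‖w‖ ^ 2 = ‖p‖ ^ 2 + 2 * inner ℝ p (w - p) + ‖w - p‖ ^ 2 := fun w => by
    rw [← norm_add_sq_real]; congr 2; abel
  have key : ∀ w, γ * f p + inner ℝ (z - p) (w - p) - 1 / 2 * ‖w - p‖ ^ 2 ≤ γ * f w := fun w => by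
    have h1 := hp w
    have h2 : ‖w - z‖ ^ 2 = ‖w - p‖ ^ 2 - 2 * inner ℝ (w - p) (z - p) + ‖z - p‖ ^ 2 := by
      rw [← norm_sub_sq_real]; congr 2; abel
    rw [real_inner_comm] at h2
    rw [norm_sub_rev p z] at h1
    linarith
  have k1 := hstrong.smul hγ.le
  have k2 := hsmooth.smul hγ.le
  constructor
  · refine aux_sub _ k1 p _ ((1 + γ * σ) / 2) (fun w => ?_)
    have := key w
    simp only [smul_eq_mul]
    rw [inner_sub_left, inner_smul_left, hw w]
    simp only [conj_trivial]
    linarith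
  · intro w
    have := aux_super _ k2 p ((γ * β) • p - (z - p)) ((1 + γ * β) / 2) (fun w => by
      have := key w
      simp only [smul_eq_mul]
      rw [inner_sub_left, inner_smul_left, hw w]
      simp only [conj_trivial]
      linarith) w
    simp only [smul_eq_mul] at this
    rw [inner_sub_left, inner_smul_left, hw w] at this
    rw [inner_sub_left, inner_smul_left, hw w]
    simp only [conj_trivial] at this ⊢
    linarith

end Helpers


/-- For `0 < σ < β` and `f : ℝⁿ → ℝ` which is `σ`-strongly convex and
`β`-smooth, `γ > 0` and `a > 0`, the operator `x ↦ a·Prox_{γf}(x) − x` is Lipschitz with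
constant `max(a/(1 + γσ) − 1, 1 − a/(1 + γβ))`. Here `P` is hypothesized to be the proximal
operator of `γf`, i.e. `P z` minimizes `x ↦ γ f x + ‖x − z‖²/2`. -/
theorem prox_scaled_sub_id_lipschitz_strongly_convex_smooth
    (n : ℕ) (σ β : ℝ) (hσ : 0 < σ) (hσβ : σ < β)
    (f : EuclideanSpace ℝ (Fin n) → ℝ)
    (hstrong : ConvexOn ℝ Set.univ (fun x => f x - σ / 2 * ‖x‖ ^ 2))
    (hsmooth : ConvexOn ℝ Set.univ (fun x => β / 2 * ‖x‖ ^ 2 - f x))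
    (γ a : ℝ) (hγ : 0 < γ) (ha : 0 < a)
    (P : EuclideanSpace ℝ (Fin n) → EuclideanSpace ℝ (Fin n))
    (hP : ∀ z x : EuclideanSpace ℝ (Fin n),
      γ * f (P z) + ‖P z - z‖ ^ 2 / 2 ≤ γ * f x + ‖x - z‖ ^ 2 / 2) :
    ∀ x y : EuclideanSpace ℝ (Fin n),
      ‖(a • P x - x) - (a • P y - y)‖
        ≤ max (a / (1 + γ * σ) - 1) (1 - a / (1 + γ * β)) * ‖x - y‖ := by
  intro x y
  obtain ⟨lp, up⟩ := aux_bounds σ β γ hγ f hstrong hsmooth x (P x) (hP x)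
  obtain ⟨lq, uq⟩ := aux_bounds σ β γ hγ f hstrong hsmooth y (P y) (hP y)
  have hL : γ * σ < γ * β := mul_lt_mul_of_pos_left hσβ hγ
  have h := aux_coco (fun w => γ * (f w - σ / 2 * ‖w‖ ^ 2)) _ _ _ _ _ (sub_pos.2 hL) lp lq up uq
  have hs : 0 < γ * σ := mul_pos hγ hσ
  have h' := aux_final (P x - P y) (x - y) (1 + γ * σ) (1 + γ * β) a (by linarith) (by linarith) ha
    (by
      convert h using 2 <;> module)
  have e : (a • P x - x) - (a • P y - y) = a • (P x - P y) - (x - y) := by module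
  rw [e]
  exact h'
end

section
/- Let M ≥ 1, let S ∈ ℝ^{M×M} be symmetric positive semidefinite with smallest and largest eigenvalues λ_min(S) and λ_max(S), let α, β ∈ ℝ, and let q ≥ 0, a > 0. Then q·S + a·I is invertible and the ℓ₂ operator norm of (α·S + β·I)·(q·S + a·I)⁻¹ equals max( |α·λ_min(S) + β| / (q·λ_min(S) + a) , |α·λ_max(S) + β| / (q·λ_max(S) + a) ). -/
open Matrix

/-- The ℓ₂ (Euclidean) operator norm of a real matrix. -/
noncomputable def l2OpNorm {m n : ℕ} (W : Matrix (Fin m) (Fin n) ℝ) : ℝ :=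
  ‖LinearMap.toContinuousLinearMap (Matrix.toEuclideanLin W)‖


lemma affine_nonneg_aux (c d l u x : ℝ) (hl : l ≤ x) (hu : x ≤ u) (h1 : 0 ≤ c + d * l)
    (h2 : 0 ≤ c + d * u) : 0 ≤ c + d * x := by
  rcases le_total 0 d with h | h <;> nlinarith

lemma ratio_bound_aux (α β q a l u x C : ℝ) (hq : 0 ≤ q) (ha : 0 < a) (h0 : 0 ≤ l)
    (hl : l ≤ x) (hu : x ≤ u)
    (h1 : |α * l + β| / (q * l + a) ≤ C) (h2 : |α * u + β| / (q * u + a) ≤ C) :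
    |α * x + β| / (q * x + a) ≤ C := by
  have p : ∀ y, 0 ≤ y → 0 < q * y + a := fun y hy => by positivity
  rw [div_le_iff₀ (p _ (by linarith)), abs_le] at *
  constructor
  · have := affine_nonneg_aux (C * a + β) (C * q + α) l u x hl hu (by linarith) (by linarith)
    linarith
  · have := affine_nonneg_aux (C * a - β) (C * q - α) l u x hl hu (by linarith) (by linarith)
    linarith

/-- For symmetric positive semidefinite `S ∈ ℝ^{M×M}` (`M ≥ 1`) with smallest
and largest eigenvalues `lmin`, `lmax`, reals `α, β`, `q ≥ 0` and `a > 0`, the matrix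
`q•S + a•I` is invertible and the ℓ₂ operator norm of `(α•S + β•I)(q•S + a•I)⁻¹` equals
`max(|α·lmin + β|/(q·lmin + a), |α·lmax + β|/(q·lmax + a))`. -/
theorem opNorm_rational_function_of_psd
    (M : ℕ) (hM : 1 ≤ M) (S : Matrix (Fin M) (Fin M) ℝ)
    (hsymm : S.IsSymm)
    (hpsd : ∀ v : Fin M → ℝ, 0 ≤ v ⬝ᵥ S.mulVec v)
    (α β q a : ℝ) (hq : 0 ≤ q) (ha : 0 < a) (lmin lmax : ℝ)
    (hmin : IsLeast {μ : ℝ | ∃ v : Fin M → ℝ, v ≠ 0 ∧ S.mulVec v = μ • v} lmin)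
    (hmax : IsGreatest {μ : ℝ | ∃ v : Fin M → ℝ, v ≠ 0 ∧ S.mulVec v = μ • v} lmax) :
    IsUnit (q • S + a • (1 : Matrix (Fin M) (Fin M) ℝ)) ∧
    l2OpNorm ((α • S + β • (1 : Matrix (Fin M) (Fin M) ℝ)) *
        (q • S + a • (1 : Matrix (Fin M) (Fin M) ℝ))⁻¹)
      = max (|α * lmin + β| / (q * lmin + a)) (|α * lmax + β| / (q * lmax + a)) := by
  set B := q • S + a • (1 : Matrix (Fin M) (Fin M) ℝ) with hB
  have hself : ∀ v : Fin M → ℝ, v ≠ 0 → 0 < v ⬝ᵥ v := by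
    intro v hv
    exact lt_of_le_of_ne (Finset.sum_nonneg fun i _ => mul_self_nonneg _)
      (fun h => hv (dotProduct_self_eq_zero.1 h.symm))
  have hBu : IsUnit B := by
    rw [← Matrix.mulVec_injective_iff_isUnit]
    rw [← Matrix.coe_mulVecLin, ← LinearMap.ker_eq_bot, LinearMap.ker_eq_bot']
    intro v hv
    by_contra hne
    have h1 : v ⬝ᵥ B.mulVec v = 0 := by
      rw [Matrix.mulVecLin_apply] at hv
      rw [hv, dotProduct_zero]
    rw [hB, Matrix.add_mulVec, Matrix.smul_mulVec, Matrix.smul_mulVec, Matrix.one_mulVec,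
      dotProduct_add, dotProduct_smul, dotProduct_smul, smul_eq_mul, smul_eq_mul] at h1
    have h2 := mul_nonneg hq (hpsd v)
    have h3 := mul_pos ha (hself v hne)
    linarith
  refine ⟨hBu, ?_⟩
  have hdet : IsUnit B.det := (Matrix.isUnit_iff_isUnit_det B).1 hBu
  have hnn : ∀ μ : ℝ, ∀ v : Fin M → ℝ, v ≠ 0 → S.mulVec v = μ • v → 0 ≤ μ := by
    intro μ v hv h
    have h1 := hpsd v
    rw [h, dotProduct_smul, smul_eq_mul] at h1
    exact nonneg_of_mul_nonneg_left h1 (hself v hv)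
  set W := (α • S + β • (1 : Matrix (Fin M) (Fin M) ℝ)) * B⁻¹ with hW
  have heig : ∀ μ : ℝ, ∀ v : Fin M → ℝ, v ≠ 0 → S.mulVec v = μ • v →
      W.mulVec v = ((α * μ + β) / (q * μ + a)) • v := by
    intro μ v hv h
    have hμ := hnn μ v hv h
    have hp : 0 < q * μ + a := by positivity
    have hBv : B.mulVec v = (q * μ + a) • v := by
      rw [hB, Matrix.add_mulVec, Matrix.smul_mulVec, Matrix.smul_mulVec, Matrix.one_mulVec, h,
        smul_smul, add_smul]
    have hBi : B⁻¹.mulVec v = (q * μ + a)⁻¹ • v := by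
      have h1 : B⁻¹.mulVec (B.mulVec v) = v := by
        rw [Matrix.mulVec_mulVec, Matrix.nonsing_inv_mul _ hdet, Matrix.one_mulVec]
      rw [hBv, Matrix.mulVec_smul] at h1
      rw [← h1, smul_smul, h1, inv_mul_cancel₀ hp.ne', one_smul]
    rw [hW, ← Matrix.mulVec_mulVec, hBi, Matrix.mulVec_smul, Matrix.add_mulVec,
      Matrix.smul_mulVec, Matrix.smul_mulVec, Matrix.one_mulVec, h, smul_smul, ← add_smul,
      smul_smul]
    congr 1
    field_simp
  unfold l2OpNorm
  set T := LinearMap.toContinuousLinearMap (Matrix.toEuclideanLin W) with hT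
  have hTeig : ∀ μ : ℝ, ∀ v : EuclideanSpace ℝ (Fin M), v.ofLp ≠ 0 →
      S.mulVec v.ofLp = μ • v.ofLp → T v = ((α * μ + β) / (q * μ + a)) • v := by
    intro μ v hv h
    apply (WithLp.ofLp_injective 2)
    have := heig μ v.ofLp hv h
    simpa [hT] using this
  have hlow : ∀ μ ∈ {μ : ℝ | ∃ v : Fin M → ℝ, v ≠ 0 ∧ S.mulVec v = μ • v},
      |α * μ + β| / (q * μ + a) ≤ ‖T‖ := by
    rintro μ ⟨v, hv, h⟩
    have hμ := hnn μ v hv h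
    have hp : 0 < q * μ + a := by positivity
    have h1 := hTeig μ (WithLp.toLp 2 v) hv h
    have h2 := T.le_opNorm (WithLp.toLp 2 v)
    rw [h1, norm_smul, Real.norm_eq_abs, abs_div, abs_of_pos hp] at h2
    refine le_of_mul_le_mul_right h2 (norm_pos_iff.2 fun h0 => hv ?_)
    simpa using h0
  apply le_antisymm
  · have hH : S.IsHermitian := by
      rw [Matrix.IsHermitian, Matrix.conjTranspose_eq_transpose_of_trivial]
      exact hsymm
    set C := max (|α * lmin + β| / (q * lmin + a)) (|α * lmax + β| / (q * lmax + a)) with hC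
    obtain ⟨v0, hv0, hm0⟩ := hmin.1
    have hl0 := hnn lmin v0 hv0 hm0
    have hC0 : 0 ≤ C := le_trans (div_nonneg (abs_nonneg _) (by positivity)) (le_max_left _ _)
    set b := hH.eigenvectorBasis with hb
    have hbne : ∀ i, (b i).ofLp ≠ 0 := by
      intro i h0
      apply b.toBasis.ne_zero i
      rw [b.coe_toBasis]
      exact WithLp.ofLp_injective 2 h0
    have hbe : ∀ i, S.mulVec (b i).ofLp = hH.eigenvalues i • (b i).ofLp :=
      fun i => hH.mulVec_eigenvectorBasis i
    refine T.opNorm_le_bound hC0 fun x => ?_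
    set r : Fin M → ℝ :=
      fun i => (α * hH.eigenvalues i + β) / (q * hH.eigenvalues i + a) with hr
    have hrb : ∀ i, |r i| ≤ C := by
      intro i
      have hmem : hH.eigenvalues i ∈ {μ : ℝ | ∃ v : Fin M → ℝ, v ≠ 0 ∧ S.mulVec v = μ • v} :=
        ⟨_, hbne i, hbe i⟩
      have h1 := hmin.2 hmem
      have h2 := hmax.2 hmem
      have hp : 0 < q * hH.eigenvalues i + a := by
        have : 0 ≤ hH.eigenvalues i := hl0.trans h1
        positivity
      rw [hr]
      simp only [abs_div, abs_of_pos hp]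
      exact ratio_bound_aux α β q a lmin lmax _ C hq ha hl0 h1 h2 (le_max_left _ _)
        (le_max_right _ _)
    have hrep : ∀ i, b.repr (T x) i = r i * b.repr x i := by
      intro i
      have hx : T x = ∑ j, (r j * b.repr x j) • b j := by
        conv_lhs => rw [← b.sum_repr x]
        rw [map_sum]
        refine Finset.sum_congr rfl fun j _ => ?_
        rw [map_smul, hTeig _ _ (hbne j) (hbe j), smul_smul, mul_comm]
      rw [hx, b.repr_apply_apply, b.orthonormal.inner_right_fintype]
    rw [← b.repr.norm_map (T x), ← b.repr.norm_map x]
    refine (sq_le_sq₀ (norm_nonneg _) (by positivity)).1 ?_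
    rw [mul_pow, EuclideanSpace.norm_sq_eq, EuclideanSpace.norm_sq_eq, Finset.mul_sum]
    refine Finset.sum_le_sum fun i _ => ?_
    rw [hrep, norm_mul, mul_pow, Real.norm_eq_abs (r i)]
    exact mul_le_mul_of_nonneg_right (pow_le_pow_left₀ (abs_nonneg _) (hrb i) 2) (sq_nonneg _)
  · exact max_le (hlow _ hmin.1) (hlow _ hmax.1)
end

section
/- Let y ∈ {−1, +1}, γ > 0, and let f : ℝ → ℝ be the logistic loss f(x) = log(1 + exp(−y·x)). Then: (i) for every p ∈ ℝ, x = Prox_{f/γ}(p) is the unique real solution of the fixed-point equation x = p + y / (γ·(1 + exp(y·x))); and (ii) the map Prox_{f/γ} is differentiable on ℝ with derivative (Prox_{f/γ})′(p) = 1 / (1 + (1/γ)·1/(2 + 2·cosh(Prox_{f/γ}(p)))). -/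
/-- Proximal operator of the logistic loss `f(x) = log(1 + exp(−yx))` for a
label `y ∈ {−1, +1}` and parameter `1/γ`, `γ > 0`. Here `P` is hypothesized to be the
proximal operator, i.e. `P p` minimizes `x ↦ f(x)/γ + (x − p)²/2`. Then (i) `P p` is the
unique solution of the fixed-point equation `x = p + y/(γ(1 + exp(yx)))`, and (ii) `P` is
differentiable with the stated derivative. -/
theorem logistic_loss_prox
    (y γ : ℝ) (hy : y = 1 ∨ y = -1) (hγ : 0 < γ)
    (f : ℝ → ℝ) (hf : ∀ x : ℝ, f x = Real.log (1 + Real.exp (-(y * x))))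
    (P : ℝ → ℝ)
    (hP : ∀ p x : ℝ, f (P p) / γ + (P p - p) ^ 2 / 2 ≤ f x / γ + (x - p) ^ 2 / 2) :
    ∀ p : ℝ,
      (P p = p + y / (γ * (1 + Real.exp (y * P p))) ∧
        (∀ x : ℝ, x = p + y / (γ * (1 + Real.exp (y * x))) → x = P p)) ∧
      HasDerivAt P (1 / (1 + (1 / γ) * (1 / (2 + 2 * Real.cosh (P p))))) p := by
  have hyy : y * y = 1 := by rcases hy with rfl | rfl <;> norm_num
  have hγ0 : γ ≠ 0 := ne_of_gt hγ
  have hfix : ∀ p : ℝ, P p = p + y / (γ * (1 + Real.exp (y * P p))) := by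
    intro p
    have hmin : IsLocalMin (fun x : ℝ => f x / γ + (x - p) ^ 2 / 2) (P p) :=
      Filter.Eventually.of_forall (fun x => hP p x)
    have hfe : f = fun x => Real.log (1 + Real.exp (-(y * x))) := funext hf
    have h1 : HasDerivAt (fun x : ℝ => -(y * x)) (-(y * 1)) (P p) :=
      ((hasDerivAt_id (P p)).const_mul y).neg
    have hpos : (1 + Real.exp (-(y * P p))) ≠ 0 := by positivity
    have h2 := (h1.exp.const_add 1).log hpos
    have h3 : HasDerivAt (fun x : ℝ => (x - p) ^ 2 / 2) (P p - p) (P p) := by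
      have := ((((hasDerivAt_id (P p)).sub_const p).pow 2).div_const 2)
      exact this.congr_deriv (by simp)
    rw [← hfe] at h2
    have h4 := hmin.hasDerivAt_eq_zero ((h2.div_const γ).add h3)
    rw [Real.exp_neg] at h4
    have hE : 0 < Real.exp (y * P p) := Real.exp_pos _
    generalize Real.exp (y * P p) = E at h4 hE ⊢
    have : E⁻¹ * -(y * 1) / (1 + E⁻¹) / γ = - (y / (γ * (1 + E))) := by
      have : 1 + E ≠ 0 := by positivity
      have : 1 + E⁻¹ ≠ 0 := by positivity
      field_simp
      ring
    linarith
  have hmono : ∀ a b : ℝ, a ≤ b →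
      y / (γ * (1 + Real.exp (y * b))) ≤ y / (γ * (1 + Real.exp (y * a))) := by
    intro a b hab
    rcases hy with rfl | rfl
    · gcongr
    · rw [neg_div, neg_div]
      apply neg_le_neg
      have : Real.exp (-1 * b) ≤ Real.exp (-1 * a) := Real.exp_le_exp.2 (by linarith)
      gcongr
  have hexp : ∀ a b p q : ℝ, a = p + y / (γ * (1 + Real.exp (y * a))) →
      b = q + y / (γ * (1 + Real.exp (y * b))) → |a - b| ≤ |p - q| := by
    intro a b p q ha hb
    rcases le_total a b with h | h
    · have := hmono a b h
      rw [abs_sub_comm a, abs_sub_comm p, abs_of_nonneg (by linarith : 0 ≤ b - a)]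
      exact le_trans (by linarith) (le_abs_self _)
    · have := hmono b a h
      rw [abs_of_nonneg (by linarith : 0 ≤ a - b)]
      exact le_trans (by linarith) (le_abs_self _)
  have hcont : Continuous P := by
    have : LipschitzWith 1 P := LipschitzWith.of_dist_le_mul (fun p q => by
      simpa [Real.dist_eq] using hexp _ _ _ _ (hfix p) (hfix q))
    exact this.continuous
  intro p
  refine ⟨⟨hfix p, fun x hx => ?_⟩, ?_⟩
  · have := hexp _ _ _ _ hx (hfix p)
    rw [sub_self, abs_zero] at this
    exact sub_eq_zero.1 (abs_nonpos_iff.1 this)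
  · have hcosh : 0 < Real.cosh (P p) := Real.cosh_pos _
    have h1 : HasDerivAt (fun x : ℝ => y * x) (y * 1) (P p) :=
      (hasDerivAt_id (P p)).const_mul y
    have hpos : (γ * (1 + Real.exp (y * P p))) ≠ 0 := by positivity
    have h2 := (hasDerivAt_id (P p)).sub
      ((hasDerivAt_const (P p) y).div ((h1.exp.const_add 1).const_mul γ) hpos)
    have hval : 1 - (0 * (γ * (1 + Real.exp (y * P p))) -
        y * (γ * (Real.exp (y * P p) * (y * 1)))) / (γ * (1 + Real.exp (y * P p))) ^ 2
        = 1 + (1 / γ) * (1 / (2 + 2 * Real.cosh (P p))) := by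
      have hc : Real.cosh (P p) = (Real.exp (y * P p) + (Real.exp (y * P p))⁻¹) / 2 := by
        rw [← Real.exp_neg, ← Real.cosh_eq]
        rcases hy with rfl | rfl <;> simp
      rw [hc]
      have hE : 0 < Real.exp (y * P p) := Real.exp_pos _
      generalize Real.exp (y * P p) = E at hE ⊢
      have e1 : 2 + 2 * ((E + E⁻¹) / 2) = (1 + E) ^ 2 / E := by
        field_simp
        ring
      rw [e1]
      have e2 : y * (γ * (E * (y * 1))) = γ * E := by linear_combination γ * E * hyy
      rw [e2]
      have : 1 + E ≠ 0 := by positivity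
      field_simp
      ring
    have h3 := h2.congr_deriv hval
    rw [one_div]
    refine HasDerivAt.of_local_left_inverse hcont.continuousAt h3 (by positivity) ?_
    refine Filter.Eventually.of_forall (fun q => ?_)
    have := hfix q
    simp only [Pi.sub_apply, Pi.div_apply, id]
    linarith
end

section
/- Let F ∈ ℝ^{M×N}, and let f : ℝ^N → ℝ and g : ℝ^M → ℝ be convex and real analytic. Then there is a unique function x̂ : (0, ∞) → ℝ^N such that for every λ₂ > 0, Fᵀ∇g(F·x̂(λ₂)) + ∇f(x̂(λ₂)) + λ₂·x̂(λ₂) = 0; for each λ₂ > 0, x̂(λ₂) is the unique minimizer of x ↦ g(Fx) + f(x) + (λ₂/2)‖x‖₂² over ℝ^N; and x̂ is real analytic on (0, ∞), i.e. each coordinate map λ₂ ↦ x̂(λ₂)ᵢ is a real analytic function on (0, ∞). -/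
open Matrix

/-- Gradient inequality for convex differentiable functions. -/
lemma rp_grad_ineq {N : ℕ} {h : (Fin N → ℝ) → ℝ} (hc : ConvexOn ℝ Set.univ h)
    {dh : (Fin N → ℝ) → Fin N → ℝ} (hdiff : Differentiable ℝ h)
    (hd : ∀ x v, fderiv ℝ h x v = dh x ⬝ᵥ v) (x y : Fin N → ℝ) :
    h x + dh x ⬝ᵥ (y - x) ≤ h y := by
  have hline : HasDerivAt (fun t : ℝ => x + t • (y - x)) (y - x) 0 := by
    simpa using ((hasDerivAt_id (0 : ℝ)).smul_const (y - x)).const_add x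
  have h1 : HasDerivAt (fun t : ℝ => h (x + t • (y - x))) (dh x ⬝ᵥ (y - x)) 0 := by
    have h0 : HasFDerivAt h (fderiv ℝ h x) (x + (0 : ℝ) • (y - x)) := by
      simpa using (hdiff x).hasFDerivAt
    have := h0.comp_hasDerivAt (0 : ℝ) hline
    rwa [hd] at this
  have hcv : ConvexOn ℝ Set.univ (fun t : ℝ => h (x + t • (y - x))) := by
    have := hc.comp_affineMap (AffineMap.lineMap x y : ℝ →ᵃ[ℝ] (Fin N → ℝ))
    refine (this.congr ?_)
    intro t _
    simp [AffineMap.lineMap_apply, add_comm]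
  have := hcv.le_slope_of_hasDerivAt (Set.mem_univ 0) (Set.mem_univ 1) zero_lt_one h1
  simp [slope_def_field] at this
  rw [dotProduct_sub]
  linarith

lemma rp_strong {N : ℕ} {h : (Fin N → ℝ) → ℝ} (hc : ConvexOn ℝ Set.univ h)
    {dh : (Fin N → ℝ) → Fin N → ℝ} (hdiff : Differentiable ℝ h)
    (hd : ∀ x v, fderiv ℝ h x v = dh x ⬝ᵥ v) (l : ℝ) (x y : Fin N → ℝ)
    (hx : dh x + l • x = 0) :
    h x + l / 2 * (x ⬝ᵥ x) + l / 2 * ((y - x) ⬝ᵥ (y - x)) ≤ h y + l / 2 * (y ⬝ᵥ y) := by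
  have h1 := rp_grad_ineq hc hdiff hd x y
  have h2 : dh x = - (l • x) := eq_neg_of_add_eq_zero_left hx
  rw [h2] at h1
  simp only [neg_dotProduct, smul_dotProduct, dotProduct_sub, sub_dotProduct, smul_eq_mul] at h1 ⊢
  rw [dotProduct_comm y x]
  linarith

lemma rp_dot_pos {N : ℕ} (v : Fin N → ℝ) (hv : v ⬝ᵥ v ≤ 0) : v = 0 := by
  have : 0 ≤ v ⬝ᵥ v := Finset.sum_nonneg fun i _ => mul_self_nonneg _
  exact dotProduct_self_eq_zero.1 (le_antisymm hv this)

lemma rp_exists {N : ℕ} {h : (Fin N → ℝ) → ℝ} (hc : ConvexOn ℝ Set.univ h)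
    {dh : (Fin N → ℝ) → Fin N → ℝ} (hdiff : Differentiable ℝ h)
    (hd : ∀ x v, fderiv ℝ h x v = dh x ⬝ᵥ v) (l : ℝ) (hl : 0 < l) :
    ∃ x, dh x + l • x = 0 := by
  have hcont : Continuous (fun x => h x + l / 2 * (x ⬝ᵥ x)) := by
    have := hdiff.continuous
    fun_prop
  -- a minimizer exists by coercivity
  have hnorm : ∀ x : Fin N → ℝ, ‖x‖ ^ 2 ≤ x ⬝ᵥ x := by
    intro x
    have hnn : 0 ≤ x ⬝ᵥ x := Finset.sum_nonneg fun i _ => mul_self_nonneg _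
    have : ‖x‖ ≤ Real.sqrt (x ⬝ᵥ x) := by
      refine (pi_norm_le_iff_of_nonneg (Real.sqrt_nonneg _)).2 fun i => ?_
      refine Real.le_sqrt_of_sq_le ?_
      rw [Real.norm_eq_abs, sq_abs, sq]
      exact Finset.single_le_sum (f := fun i => x i * x i)
        (fun i _ => mul_self_nonneg _) (Finset.mem_univ i)
    calc ‖x‖ ^ 2 ≤ (Real.sqrt (x ⬝ᵥ x)) ^ 2 := by gcongr
      _ = _ := Real.sq_sqrt hnn
  obtain ⟨x0, hx0⟩ : ∃ x0, ∀ x, h x0 + l / 2 * (x0 ⬝ᵥ x0) ≤ h x + l / 2 * (x ⬝ᵥ x) := by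
    refine Continuous.exists_forall_le hcont ?_
    have hlow : ∀ x, h 0 + ‖x‖ * (l / 2 * ‖x‖ - ‖fderiv ℝ h 0‖) ≤ h x + l / 2 * (x ⬝ᵥ x) := by
      intro x
      have h1 := rp_grad_ineq hc hdiff hd 0 x
      rw [← hd, sub_zero] at h1
      have h2 := (fderiv ℝ h 0).le_opNorm x
      have h3 := neg_abs_le (fderiv ℝ h 0 x)
      rw [Real.norm_eq_abs] at h2
      have h4 := mul_le_mul_of_nonneg_left (hnorm x) (by positivity : 0 ≤ l / 2)
      nlinarith
    refine Filter.tendsto_atTop_mono hlow ?_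
    refine Filter.tendsto_atTop_add_const_left _ _ ?_
    have hn := tendsto_norm_cocompact_atTop (E := Fin N → ℝ)
    refine hn.atTop_mul_atTop₀ ?_
    exact Filter.tendsto_atTop_add_const_right _ _ (hn.const_mul_atTop (by positivity))
  refine ⟨x0, ?_⟩
  -- directional derivative vanishes
  have key : ∀ v, (dh x0 + l • x0) ⬝ᵥ v = 0 := by
    intro v
    have hline : HasDerivAt (fun t : ℝ => x0 + t • v) v 0 := by
      simpa using ((hasDerivAt_id (0 : ℝ)).smul_const v).const_add x0
    have h1 : HasDerivAt (fun t : ℝ => h (x0 + t • v)) (dh x0 ⬝ᵥ v) 0 := by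
      have h0 : HasFDerivAt h (fderiv ℝ h x0) (x0 + (0 : ℝ) • v) := by
        simpa using (hdiff x0).hasFDerivAt
      have := h0.comp_hasDerivAt (0 : ℝ) hline
      rwa [hd] at this
    have h2 : HasDerivAt (fun t : ℝ => l / 2 * ((x0 + t • v) ⬝ᵥ (x0 + t • v)))
        (l * (x0 ⬝ᵥ v)) 0 := by
      have e : (fun t : ℝ => l / 2 * ((x0 + t • v) ⬝ᵥ (x0 + t • v))) =
          fun t => l / 2 * (x0 ⬝ᵥ x0) + t * (l * (x0 ⬝ᵥ v)) + t ^ 2 * (l / 2 * (v ⬝ᵥ v)) := by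
        funext t
        simp only [dotProduct_add, add_dotProduct, smul_dotProduct, dotProduct_smul, smul_eq_mul]
        rw [dotProduct_comm v x0]
        ring
      rw [e]
      have := (((hasDerivAt_id (0 : ℝ)).mul_const (l * (x0 ⬝ᵥ v))).const_add
        (l / 2 * (x0 ⬝ᵥ x0))).fun_add ((hasDerivAt_pow 2 (0 : ℝ)).mul_const (l / 2 * (v ⬝ᵥ v)))
      simpa using this
    have hmin : IsLocalMin (fun t : ℝ => h (x0 + t • v) +
        l / 2 * ((x0 + t • v) ⬝ᵥ (x0 + t • v))) 0 := by
      refine Filter.Eventually.of_forall fun t => ?_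
      simpa using hx0 (x0 + t • v)
    have := hmin.hasDerivAt_eq_zero (h1.add h2)
    simpa [add_dotProduct, smul_dotProduct] using this
  exact rp_dot_pos _ (key _).le

lemma rp_unique {N : ℕ} {h : (Fin N → ℝ) → ℝ} (hc : ConvexOn ℝ Set.univ h)
    {dh : (Fin N → ℝ) → Fin N → ℝ} (hdiff : Differentiable ℝ h)
    (hd : ∀ x v, fderiv ℝ h x v = dh x ⬝ᵥ v) (l : ℝ) (hl : 0 < l) (x y : Fin N → ℝ)
    (hx : dh x + l • x = 0)
    (hy : h y + l / 2 * (y ⬝ᵥ y) ≤ h x + l / 2 * (x ⬝ᵥ x)) : y = x := by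
  have := rp_strong hc hdiff hd l x y hx
  have h2 : l / 2 * ((y - x) ⬝ᵥ (y - x)) ≤ 0 := by linarith
  have h3 : (y - x) ⬝ᵥ (y - x) ≤ 0 := by
    by_contra hcon
    push Not at hcon
    have : 0 < l / 2 * ((y - x) ⬝ᵥ (y - x)) := by positivity
    linarith
  exact sub_eq_zero.1 (rp_dot_pos _ h3)

lemma rp_min {N : ℕ} {h : (Fin N → ℝ) → ℝ} (hc : ConvexOn ℝ Set.univ h)
    {dh : (Fin N → ℝ) → Fin N → ℝ} (hdiff : Differentiable ℝ h)
    (hd : ∀ x v, fderiv ℝ h x v = dh x ⬝ᵥ v) (l : ℝ) (hl : 0 < l) (x y : Fin N → ℝ)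
    (hx : dh x + l • x = 0) :
    h x + l / 2 * (x ⬝ᵥ x) ≤ h y + l / 2 * (y ⬝ᵥ y) := by
  have := rp_strong hc hdiff hd l x y hx
  have h3 : 0 ≤ (y - x) ⬝ᵥ (y - x) := Finset.sum_nonneg fun i _ => mul_self_nonneg _
  have : 0 ≤ l / 2 * ((y - x) ⬝ᵥ (y - x)) := by positivity
  linarith

open scoped ContDiff Topology in
lemma rp_analytic {N : ℕ} {h : (Fin N → ℝ) → ℝ} (hc : ConvexOn ℝ Set.univ h)
    {dh : (Fin N → ℝ) → Fin N → ℝ} (ha : AnalyticOnNhd ℝ h Set.univ)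
    (hdiff : Differentiable ℝ h)
    (hd : ∀ x v, fderiv ℝ h x v = dh x ⬝ᵥ v) (xh : ℝ → Fin N → ℝ)
    (hxh : ∀ l, 0 < l → dh (xh l) + l • xh l = 0) (l : ℝ) (hl : 0 < l) :
    AnalyticAt ℝ xh l := by
  have hda : AnalyticOnNhd ℝ dh Set.univ := by
    have e : dh = fun x i => fderiv ℝ h x (Pi.single i 1) := by
      funext x i
      rw [hd]; simp
    intro x hx
    rw [e, analyticAt_pi_iff]
    intro i
    have := ha.fderiv x hx
    exact ((ContinuousLinearMap.apply ℝ ℝ (Pi.single i (1 : ℝ) : Fin N → ℝ)).analyticAt _).comp this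
  set G : ℝ × (Fin N → ℝ) → (Fin N → ℝ) := fun p => dh p.2 + p.1 • p.2 with hG
  have hGa : AnalyticAt ℝ G (l, xh l) := by
    have h1 : AnalyticAt ℝ (fun p : ℝ × (Fin N → ℝ) => dh p.2) (l, xh l) :=
      AnalyticAt.fun_comp (f := Prod.snd) (x := (l, xh l)) (hda (xh l) (Set.mem_univ _)) analyticAt_snd
    exact h1.add (analyticAt_fst.smul analyticAt_snd)
  have hGc : ContDiffAt ℝ ω G (l, xh l) := hGa.contDiffAt
  have hinv : (fderiv ℝ G (l, xh l) ∘L .inr ℝ ℝ (Fin N → ℝ)).IsInvertible := by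
    set D := fderiv ℝ G (l, xh l) ∘L .inr ℝ ℝ (Fin N → ℝ) with hD
    have hinj : Function.Injective D := by
      rw [injective_iff_map_eq_zero]
      intro v hv
      have hline : HasDerivAt (fun t : ℝ => (l, xh l + t • v)) ((0 : ℝ), v) 0 := by
        refine (hasDerivAt_const _ _).prodMk ?_
        simpa using ((hasDerivAt_id (0 : ℝ)).smul_const v).const_add (xh l)
      have h1 : HasDerivAt (fun t : ℝ => G (l, xh l + t • v)) 0 0 := by
        have h0 : HasFDerivAt G (fderiv ℝ G (l, xh l)) (l, xh l + (0 : ℝ) • v) := by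
          simpa using hGa.differentiableAt.hasFDerivAt
        have := h0.comp_hasDerivAt (0 : ℝ) hline
        have e : fderiv ℝ G (l, xh l) ((0 : ℝ), v) = 0 := by simpa [hD] using hv
        rwa [e] at this
      have h2 : HasDerivAt (fun t : ℝ => G (l, xh l + t • v) ⬝ᵥ v - t * (l * (v ⬝ᵥ v)))
          (0 - 1 * (l * (v ⬝ᵥ v))) 0 := by
        refine HasDerivAt.sub ?_ ((hasDerivAt_id (0 : ℝ)).mul_const _)
        rw [hasDerivAt_pi] at h1
        have := HasDerivAt.fun_sum (u := Finset.univ) fun i _ => (h1 i).mul_const (v i)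
        simpa [dotProduct] using this
      have hmono : Monotone (fun t : ℝ => G (l, xh l + t • v) ⬝ᵥ v - t * (l * (v ⬝ᵥ v))) := by
        intro s t hst
        rcases hst.eq_or_lt with rfl | hst
        · exact le_rfl
        have a1 := rp_grad_ineq hc hdiff hd (xh l + s • v) (xh l + t • v)
        have a2 := rp_grad_ineq hc hdiff hd (xh l + t • v) (xh l + s • v)
        have e1 : xh l + t • v - (xh l + s • v) = (t - s) • v := by module
        have e2 : xh l + s • v - (xh l + t • v) = (s - t) • v := by module
        rw [e1, dotProduct_smul, smul_eq_mul] at a1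
        rw [e2, dotProduct_smul, smul_eq_mul] at a2
        have a3 : dh (xh l + s • v) ⬝ᵥ v ≤ dh (xh l + t • v) ⬝ᵥ v := by
          have : 0 ≤ (t - s) * (dh (xh l + t • v) ⬝ᵥ v - dh (xh l + s • v) ⬝ᵥ v) := by linarith
          have := nonneg_of_mul_nonneg_right this (sub_pos.2 hst)
          linarith
        simp only [hG, add_dotProduct, smul_dotProduct, smul_eq_mul]
        linarith
      have h3 : 0 ≤ 0 - 1 * (l * (v ⬝ᵥ v)) := by
        rw [← h2.deriv]
        exact hmono.deriv_nonneg
      refine rp_dot_pos v ?_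
      by_contra hcon
      push Not at hcon
      have : 0 < l * (v ⬝ᵥ v) := by positivity
      linarith
    refine ⟨(LinearEquiv.ofInjectiveEndo D.toLinearMap hinj).toContinuousLinearEquiv, ?_⟩
    ext v
    rfl
  have hψ := hGc.contDiffAt_implicitFunction (by simp) hinv
  have hev := hGc.eventually_apply_implicitFunction (by simp) hinv
  refine hψ.analyticAt.congr ?_
  filter_upwards [hev, lt_mem_nhds hl] with m hm hm0
  have hz : G (l, xh l) = 0 := hxh l hl
  rw [hz] at hm
  exact rp_unique hc hdiff hd m hm0 _ _ (hxh m hm0) (rp_min hc hdiff hd m hm0 _ _ hm)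

/-- Analyticity of the ridge regularization path. For `F ∈ ℝ^{M×N}` and
convex real analytic `f`, `g` (with gradients `df`, `dg`), there is a unique map
`λ₂ ↦ x̂(λ₂)` on `(0,∞)` solving the first-order condition
`Fᵀ∇g(F x̂(λ₂)) + ∇f(x̂(λ₂)) + λ₂ x̂(λ₂) = 0`; moreover `x̂(λ₂)` is the unique minimizer of
`x ↦ g(Fx) + f(x) + (λ₂/2)‖x‖²` and each coordinate `λ₂ ↦ x̂(λ₂)ᵢ` is real analytic on
`(0,∞)`. -/
theorem regularization_path_real_analytic
    (M N : ℕ) (F : Matrix (Fin M) (Fin N) ℝ)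
    (f : (Fin N → ℝ) → ℝ) (g : (Fin M → ℝ) → ℝ)
    (hf : ConvexOn ℝ Set.univ f) (hg : ConvexOn ℝ Set.univ g)
    (hfa : AnalyticOnNhd ℝ f Set.univ) (hga : AnalyticOnNhd ℝ g Set.univ)
    (df : (Fin N → ℝ) → Fin N → ℝ) (dg : (Fin M → ℝ) → Fin M → ℝ)
    (hdf : ∀ x : Fin N → ℝ, HasFDerivAt f
      (∑ i, df x i • (ContinuousLinearMap.proj i : (Fin N → ℝ) →L[ℝ] ℝ)) x)
    (hdg : ∀ z : Fin M → ℝ, HasFDerivAt g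
      (∑ j, dg z j • (ContinuousLinearMap.proj j : (Fin M → ℝ) →L[ℝ] ℝ)) z) :
    ∃ xh : ℝ → Fin N → ℝ,
      (∀ l2 : ℝ, 0 < l2 →
        (Fᵀ.mulVec (dg (F.mulVec (xh l2))) + df (xh l2) + l2 • xh l2 = 0) ∧
        (∀ x : Fin N → ℝ,
          g (F.mulVec (xh l2)) + f (xh l2) + l2 / 2 * (xh l2 ⬝ᵥ xh l2)
            ≤ g (F.mulVec x) + f x + l2 / 2 * (x ⬝ᵥ x)) ∧
        (∀ x : Fin N → ℝ,
          (g (F.mulVec x) + f x + l2 / 2 * (x ⬝ᵥ x)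
            ≤ g (F.mulVec (xh l2)) + f (xh l2) + l2 / 2 * (xh l2 ⬝ᵥ xh l2)) → x = xh l2)) ∧
      (∀ i : Fin N, AnalyticOnNhd ℝ (fun l2 : ℝ => xh l2 i) (Set.Ioi 0)) ∧
      (∀ xh' : ℝ → Fin N → ℝ,
        (∀ l2 : ℝ, 0 < l2 →
          Fᵀ.mulVec (dg (F.mulVec (xh' l2))) + df (xh' l2) + l2 • xh' l2 = 0) →
        ∀ l2 : ℝ, 0 < l2 → xh' l2 = xh l2) := by
  set h : (Fin N → ℝ) → ℝ := fun x => g (F.mulVec x) + f x with hh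
  set dh : (Fin N → ℝ) → Fin N → ℝ := fun x => Fᵀ.mulVec (dg (F.mulVec x)) + df x with hdh
  have hc : ConvexOn ℝ Set.univ h := (hg.comp_linearMap F.mulVecLin).add hf
  have hFd : ∀ x, HasFDerivAt h ((∑ j, dg (F.mulVec x) j •
      (ContinuousLinearMap.proj j : (Fin M → ℝ) →L[ℝ] ℝ)) ∘L
      F.mulVecLin.toContinuousLinearMap +
      ∑ i, df x i • (ContinuousLinearMap.proj i : (Fin N → ℝ) →L[ℝ] ℝ)) x := fun x =>
    ((hdg (F.mulVec x)).comp x F.mulVecLin.toContinuousLinearMap.hasFDerivAt).add (hdf x)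
  have hdiff : Differentiable ℝ h := fun x => (hFd x).differentiableAt
  have hd : ∀ x v, fderiv ℝ h x v = dh x ⬝ᵥ v := by
    intro x v
    have e : (Fᵀ *ᵥ dg (F *ᵥ x)) ⬝ᵥ v = dg (F *ᵥ x) ⬝ᵥ (F *ᵥ v) := by
      rw [Matrix.mulVec_transpose, ← Matrix.dotProduct_mulVec]
    rw [(hFd x).fderiv, hdh, add_dotProduct, e]
    simp [dotProduct]
  have ha : AnalyticOnNhd ℝ h Set.univ := fun x _ =>
    ((hga (F.mulVec x) (Set.mem_univ _)).comp
      (F.mulVecLin.toContinuousLinearMap.analyticAt x)).add (hfa x (Set.mem_univ _))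
  have hex : ∀ l : ℝ, ∃ x, 0 < l → dh x + l • x = 0 := by
    intro l
    by_cases hl : 0 < l
    · obtain ⟨x, hx⟩ := rp_exists hc hdiff hd l hl
      exact ⟨x, fun _ => hx⟩
    · exact ⟨0, fun h => absurd h hl⟩
  choose xh hxh using hex
  refine ⟨xh, fun l hl => ⟨hxh l hl, fun x => rp_min hc hdiff hd l hl _ _ (hxh l hl),
    fun x hx => rp_unique hc hdiff hd l hl _ _ (hxh l hl) hx⟩, ?_, ?_⟩
  · intro i l hl
    exact analyticAt_pi_iff.1 (rp_analytic hc ha hdiff hd xh hxh l hl) i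
  · intro xh' hxh' l hl
    exact rp_unique hc hdiff hd l hl _ _ (hxh l hl)
      (rp_min hc hdiff hd l hl _ _ (hxh' l hl))
end
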